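/- arXiv:2012.07568 — 6 statements merged into one kernel-verified Lean document; each statement's English description precedes it below -/
import Mathlib

section
/- Let n ≥ 2 be an integer and a ∈ ℚ. The polynomial X^n − a is reducible over ℚ (i.e., not irreducible in ℚ[X]) if and only if either there exist t ∈ ℕ with t ∣ n, t > 1, and b ∈ ℚ with a = b^t, or 4 ∣ n and there exists b ∈ ℚ with a = −4·b^4. -/
open Polynomial

/-!
Write `n = p * m` with `p` prime and let `x` be a root of `X ^ p - a`. If `a` is not a `p`-th power,
then `X ^ p - a` is irreducible, and `X ^ n - a` is irreducible over `K` as soon as `X ^ m - x` is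
irreducible over `K(x)`. So, by induction, it suffices to push an obstruction for `x` down to one
for `a`, which the norm of `K(x) / K` does: it sends `x` to `a` when `p` is odd and to `-a` when
`p = 2`. The sign matters only if `x` is a square, and comparing coefficients in `x = (u + v x) ^ 2`
then gives `a = -4 * u ^ 4`. If `p = 2` and `x = -4 * b ^ 4`, the norm shows that `a = -c ^ 2` with
`c = 4 * N(b) ^ 2`; hence `-1 = (x / c) ^ 2` is a square in `K(x)`, and so is `x`.
-/

/-- The obstruction to irreducibility of `X ^ n - C a` in Capelli's criterion: `a` is a perfect
power whose exponent divides `n`, or `X ^ n - C a` factors by the identity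
`X ^ 4 + 4 * b ^ 4 = (X ^ 2 + 2 * b * X + 2 * b ^ 2) * (X ^ 2 - 2 * b * X + 2 * b ^ 2)`. -/
def CapelliObstruction {R : Type*} [Ring R] (n : ℕ) (a : R) : Prop :=
  (∃ t : ℕ, t ∣ n ∧ 1 < t ∧ ∃ b : R, a = b ^ t) ∨ (4 ∣ n ∧ ∃ b : R, a = -4 * b ^ 4)

section Reducible

variable {R : Type*} [CommRing R]

theorem not_isUnit_X_sq_add_C_mul_X_add_C [Nontrivial R] (c d : R) :
    ¬ IsUnit (X ^ 2 + C c * X + C d) := by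
  have hmonic : (X ^ 2 + C c * X + C d).Monic := by monicity!
  have hdeg : (X ^ 2 + C c * X + C d).natDegree = 2 := by compute_degree!
  intro hunit
  simp [hmonic.eq_one_of_isUnit hunit] at hdeg

theorem not_irreducible_X_pow_four_sub_C_neg_four_mul_pow_four [Nontrivial R] (b : R) :
    ¬ Irreducible (X ^ 4 - C (-4 * b ^ 4)) := by
  intro hirr
  have hfactor : X ^ 4 - C (-4 * b ^ 4) =
      (X ^ 2 + C (2 * b) * X + C (2 * b ^ 2)) * (X ^ 2 + C (-2 * b) * X + C (2 * b ^ 2)) := by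
    simp only [C_mul, C_neg, C_pow, map_ofNat]
    ring
  exact (hirr.isUnit_or_isUnit hfactor).elim
    (not_isUnit_X_sq_add_C_mul_X_add_C _ _) (not_isUnit_X_sq_add_C_mul_X_add_C _ _)

theorem not_irreducible_X_pow_sub_C_neg_four_mul_pow_four [IsDomain R] {n : ℕ} (hn : n ≠ 0)
    (h4 : 4 ∣ n) (b : R) : ¬ Irreducible (X ^ n - C (-4 * b ^ 4)) := by
  obtain ⟨k, rfl⟩ := h4
  have hexpand : X ^ (4 * k) - C (-4 * b ^ 4) = expand R k (X ^ 4 - C (-4 * b ^ 4)) := by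
    rw [map_sub, map_pow, expand_X, expand_C, ← pow_mul, mul_comm]
  rw [hexpand]
  exact fun hirr ↦ not_irreducible_X_pow_four_sub_C_neg_four_mul_pow_four b
    (of_irreducible_expand (right_ne_zero_of_mul hn) hirr)

theorem CapelliObstruction.not_irreducible {K : Type*} [Field K] {n : ℕ} (hn : n ≠ 0) {a : K}
    (h : CapelliObstruction n a) : ¬ Irreducible (X ^ n - C a) := by
  rcases h with ⟨t, htn, ht, b, rfl⟩ | ⟨h4, b, rfl⟩
  · exact fun hirr ↦ pow_ne_of_irreducible_X_pow_sub_C hirr htn ht.ne' b rfl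
  · exact not_irreducible_X_pow_sub_C_neg_four_mul_pow_four hn h4 b

end Reducible

theorem isSquare_neg_four_mul_pow_four {R : Type*} [CommRing R] (h : IsSquare (-1 : R)) (b : R) :
    IsSquare (-4 * b ^ 4) := by
  have hfactor : -4 * b ^ 4 = -1 * (2 * b ^ 2) ^ 2 := by ring
  exact hfactor ▸ h.mul (.sq _)

theorem norm_neg_four_mul_pow_four {R S : Type*} [CommRing R] [CommRing S] [Algebra R S]
    [Module.Free R S] (b : S) :
    Algebra.norm R (-4 * b ^ 4) = (-4) ^ Module.finrank R S * Algebra.norm R b ^ 4 := by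
  have hneg_four : (-4 : S) = algebraMap R S (-4) := by simp only [map_neg, map_ofNat]
  rw [map_mul, map_pow, hneg_four, Algebra.norm_algebraMap]

section PowerBasis

variable {R S : Type*} [CommRing R] [CommRing S] [Algebra R S] (pb : PowerBasis R S) {n : ℕ} {a : R}

theorem gen_pow_of_minpoly_eq_X_pow_sub_C (h : minpoly R pb.gen = X ^ n - C a) :
    pb.gen ^ n = algebraMap R S a := by
  have hroot := minpoly.aeval R pb.gen
  simpa [h, sub_eq_zero] using hroot

theorem dim_of_minpoly_eq_X_pow_sub_C [Nontrivial R] (h : minpoly R pb.gen = X ^ n - C a) :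
    pb.dim = n := by
  rw [← pb.natDegree_minpoly, h, natDegree_X_pow_sub_C]

theorem norm_gen_of_minpoly_eq_X_pow_sub_C [Nontrivial R] (hn : n ≠ 0)
    (h : minpoly R pb.gen = X ^ n - C a) : Algebra.norm R pb.gen = (-1) ^ (n + 1) * a := by
  rw [Algebra.PowerBasis.norm_gen_eq_coeff_zero_minpoly, dim_of_minpoly_eq_X_pow_sub_C pb h, h]
  simp [hn.symm, pow_succ]

theorem exists_eq_add_mul_gen_of_dim_eq_two [Nontrivial S] (hdim : pb.dim = 2) (b : S) :
    ∃ u v : R, b = algebraMap R S u + algebraMap R S v * pb.gen := by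
  obtain ⟨f, hf, rfl⟩ := pb.exists_eq_aeval b
  obtain ⟨v, u, rfl⟩ := exists_eq_X_add_C_of_natDegree_le_one (show f.natDegree ≤ 1 by lia)
  exact ⟨u, v, by simp [add_comm]⟩

theorem eq_zero_of_add_mul_gen_eq_zero (hdim : pb.dim = 2) {u v : R}
    (h : algebraMap R S u + algebraMap R S v * pb.gen = 0) : u = 0 ∧ v = 0 := by
  have hpoly : C v * X + C u = 0 := by
    by_contra hne
    have hle := pb.dim_le_natDegree_of_root hne (by simpa [add_comm] using h)
    have hlinear := natDegree_linear_le (a := v) (b := u)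
    lia
  exact ⟨by simpa using congrArg (coeff · 0) hpoly, by simpa using congrArg (coeff · 1) hpoly⟩

theorem exists_eq_neg_four_mul_pow_four_of_isSquare_gen [Nontrivial S]
    (h : minpoly R pb.gen = X ^ 2 - C a) (hsq : IsSquare pb.gen) : ∃ u : R, a = -4 * u ^ 4 := by
  have := (algebraMap R S).domain_nontrivial
  have hdim := dim_of_minpoly_eq_X_pow_sub_C pb h
  have hgen := gen_pow_of_minpoly_eq_X_pow_sub_C pb h
  obtain ⟨b, hb⟩ := hsq
  obtain ⟨u, v, rfl⟩ := exists_eq_add_mul_gen_of_dim_eq_two pb hdim b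
  have hcoeff :
      algebraMap R S (u ^ 2 + a * v ^ 2) + algebraMap R S (2 * u * v - 1) * pb.gen = 0 := by
    simp only [map_add, map_mul, map_pow, map_sub, map_one, map_ofNat, ← hgen]
    linear_combination -hb
  obtain ⟨hconst, hlin⟩ := eq_zero_of_add_mul_gen_eq_zero pb hdim hcoeff
  exact ⟨u, by linear_combination 4 * u ^ 2 * hconst - a * (2 * u * v + 1) * hlin⟩

theorem CapelliObstruction.of_isSquare_gen [Nontrivial S] (hn : Even n)
    (hmin : minpoly R pb.gen = X ^ 2 - C a) (hsq : IsSquare pb.gen) :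
    CapelliObstruction (2 * n) a :=
  .inr ⟨mul_dvd_mul_left 2 hn.two_dvd, exists_eq_neg_four_mul_pow_four_of_isSquare_gen pb hmin hsq⟩

theorem CapelliObstruction.of_gen_of_odd [Nontrivial R] {p : ℕ} (hp : Odd p)
    (hmin : minpoly R pb.gen = X ^ p - C a) (h : CapelliObstruction n pb.gen) :
    CapelliObstruction (p * n) a := by
  have hnorm : Algebra.norm R pb.gen = a := by
    rw [norm_gen_of_minpoly_eq_X_pow_sub_C pb hp.pos.ne' hmin, hp.add_one.neg_one_pow, one_mul]
  rcases h with ⟨t, htn, ht, b, hb⟩ | ⟨h4, b, hb⟩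
  · exact .inl ⟨t, htn.mul_left p, ht, Algebra.norm R b, by rw [← hnorm, hb, map_pow]⟩
  · obtain ⟨m, rfl⟩ := hp
    have hpow : (-4 : R) ^ (2 * m + 1) = -4 * (2 ^ m) ^ 4 := by
      have hsq : (-4 : R) ^ 2 = 2 ^ 4 := by norm_num
      rw [pow_succ', pow_mul, hsq, pow_right_comm]
    have hfree : Module.Free R S := .of_basis pb.basis
    refine .inr ⟨h4.mul_left _, 2 ^ m * Algebra.norm R b, ?_⟩
    rw [← hnorm, hb, norm_neg_four_mul_pow_four, pb.finrank,
      dim_of_minpoly_eq_X_pow_sub_C pb hmin, hpow]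
    ring

end PowerBasis

section Descent

variable {K L : Type*} [Field K] [Field L] [Algebra K L] (pb : PowerBasis K L) {a : K}

theorem isSquare_gen_of_eq_neg_four_mul_pow_four (h : minpoly K pb.gen = X ^ 2 - C a) {b : L}
    (hb : pb.gen = -4 * b ^ 4) : IsSquare pb.gen := by
  rcases eq_or_ne pb.gen 0 with hgen | hgen
  · exact hgen ▸ .zero
  set c := 4 * Algebra.norm K b ^ 2
  have ha : a = -c ^ 2 := by
    have hnorm := norm_gen_of_minpoly_eq_X_pow_sub_C pb two_ne_zero h
    rw [hb, norm_neg_four_mul_pow_four, pb.finrank, dim_of_minpoly_eq_X_pow_sub_C pb h] at hnorm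
    linear_combination hnorm
  have hgen_sq : pb.gen ^ 2 = -algebraMap K L c ^ 2 := by
    rw [gen_pow_of_minpoly_eq_X_pow_sub_C pb h, ha, map_neg, map_pow]
  have hneg_one : IsSquare (-1 : L) := by
    have hc : algebraMap K L c ≠ 0 := by
      intro hc
      simp [hc, hgen] at hgen_sq
    have hdiv : (-1 : L) = (pb.gen / algebraMap K L c) ^ 2 := by
      rw [div_pow, hgen_sq, neg_div, div_self (pow_ne_zero 2 hc)]
    exact hdiv ▸ .sq _
  exact hb ▸ isSquare_neg_four_mul_pow_four hneg_one b

theorem CapelliObstruction.of_gen_of_two {n : ℕ} (hmin : minpoly K pb.gen = X ^ 2 - C a)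
    (h : CapelliObstruction n pb.gen) : CapelliObstruction (2 * n) a := by
  rcases h with ⟨t, htn, ht, b, hb⟩ | ⟨h4, b, hb⟩
  · rcases t.even_or_odd with heven | hodd
    · exact .of_isSquare_gen pb (heven.trans_dvd htn) hmin (hb ▸ heven.isSquare_pow b)
    · have hnorm := norm_gen_of_minpoly_eq_X_pow_sub_C pb two_ne_zero hmin
      rw [hb, map_pow] at hnorm
      refine .inl ⟨t, htn.mul_left 2, ht, -Algebra.norm K b, ?_⟩
      rw [hodd.neg_pow, hnorm]
      ring
  · exact .of_isSquare_gen pb (even_iff_two_dvd.mpr (dvd_trans (by norm_num) h4)) hmin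
      (isSquare_gen_of_eq_neg_four_mul_pow_four pb hmin hb)

theorem CapelliObstruction.of_gen {p n : ℕ} (hp : p.Prime)
    (hmin : minpoly K pb.gen = X ^ p - C a) (h : CapelliObstruction n pb.gen) :
    CapelliObstruction (p * n) a := by
  rcases hp.eq_two_or_odd' with rfl | hodd
  · exact h.of_gen_of_two pb hmin
  · exact h.of_gen_of_odd pb hodd hmin

end Descent

theorem irreducible_X_pow_sub_C_of_not_capelliObstruction {K : Type*} [Field K] {n : ℕ}
    (hn : n ≠ 0) {a : K} (h : ¬ CapelliObstruction n a) : Irreducible (X ^ n - C a) := by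
  induction n using induction_on_primes generalizing K with
  | zero => exact absurd rfl hn
  | one => simpa using irreducible_X_sub_C a
  | prime_mul p m hp ih =>
    have hirr : Irreducible (X ^ p - C a) := X_pow_sub_C_irreducible_of_prime hp fun b hb ↦
      h (.inl ⟨p, dvd_mul_right p m, hp.one_lt, b, hb.symm⟩)
    rw [mul_comm]
    refine X_pow_mul_sub_C_irreducible hirr fun E _ _ x hx ↦ ?_
    have hint : IsIntegral K x := minpoly.ne_zero_iff.mp (hx ▸ hirr.ne_zero)
    let pb := IntermediateField.adjoin.powerBasis hint
    have hmin : minpoly K pb.gen = X ^ p - C a := by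
      rw [IntermediateField.adjoin.powerBasis_gen, IntermediateField.minpoly_gen, hx]
    rw [← IntermediateField.adjoin.powerBasis_gen hint]
    exact ih (right_ne_zero_of_mul hn) fun hgen ↦ h (hgen.of_gen pb hp hmin)

theorem capelli_binomial_general {K : Type*} [Field K] {n : ℕ} (hn : n ≠ 0) (a : K) :
    ¬ Irreducible (X ^ n - C a) ↔
      (∃ t : ℕ, t ∣ n ∧ 1 < t ∧ ∃ b : K, a = b ^ t) ∨
      (4 ∣ n ∧ ∃ b : K, a = -4 * b ^ 4) :=
  ⟨not_imp_comm.mp (irreducible_X_pow_sub_C_of_not_capelliObstruction hn),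
    CapelliObstruction.not_irreducible hn⟩

/-- Capelli's theorem: reducibility of the binomial `X^n - a` over `ℚ`. -/
theorem capelli_binomial (n : ℕ) (hn : 2 ≤ n) (a : ℚ) :
    ¬ Irreducible ((X : Polynomial ℚ) ^ n - C a) ↔
      (∃ t : ℕ, t ∣ n ∧ 1 < t ∧ ∃ b : ℚ, a = b ^ t) ∨
      (4 ∣ n ∧ ∃ b : ℚ, a = -4 * b ^ 4) :=
  capelli_binomial_general (by lia) a
end

section
/- Let f(X) = X^n + a_{n−1}X^{n−1} + ⋯ + a_1X + a_0 be a monic polynomial with integer coefficients, of degree n ≥ 2, with a_0 ≠ 0. If |a_{n−1}| > 1 + |a_{n−2}| + ⋯ + |a_1| + |a_0|, then f is irreducible in ℤ[X]. -/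
open Polynomial Finset

/-!
Let `α` be a root of `f` with `1 ≤ ‖α‖` and write `f = (X - α) g`. Comparing coefficients, the bound
on those of `f` forces the leading coefficient of `g` to dominate the sum of all its other
coefficients, so every root of `g` has norm less than `1`. On the other hand, a nonconstant monic
factor of `f` has a nonzero integer as constant term, the product of its roots up to sign, so one of
them has norm at least `1`. Two such factors would contradict the first observation.
-/

section NormedRing

variable {R : Type*} [NormedRing R] [NormMulClass R]

lemma mul_sum_norm_coeff_sub_le_sum_norm_coeff_X_sub_C_mul (α : R) (g : R[X]) (d : ℕ) :
    ‖α‖ * ∑ i ∈ range (d + 1), ‖g.coeff i‖ - ∑ i ∈ range d, ‖g.coeff i‖ ≤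
      ∑ i ∈ range (d + 1), ‖((X - C α) * g).coeff i‖ := by
  have norm_coeff_ge (i : ℕ) :
      ‖α‖ * ‖g.coeff (i + 1)‖ - ‖g.coeff i‖ ≤ ‖((X - C α) * g).coeff (i + 1)‖ := by
    rw [sub_mul, coeff_sub, coeff_X_mul, coeff_C_mul, ← norm_mul, norm_sub_rev]
    exact norm_sub_norm_le _ _
  have sum_ge : ‖α‖ * ∑ i ∈ range d, ‖g.coeff (i + 1)‖ - ∑ i ∈ range d, ‖g.coeff i‖ ≤
      ∑ i ∈ range d, ‖((X - C α) * g).coeff (i + 1)‖ := by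
    rw [mul_sum, ← sum_sub_distrib]
    exact sum_le_sum fun i _ => norm_coeff_ge i
  have norm_coeff_zero : ‖((X - C α) * g).coeff 0‖ = ‖α‖ * ‖g.coeff 0‖ := by
    simp [mul_coeff_zero]
  rw [sum_range_succ', sum_range_succ', norm_coeff_zero, mul_add]
  linarith

lemma norm_coeff_X_sub_C_mul_add_le (α : R) (g : R[X]) (d : ℕ) :
    ‖((X - C α) * g).coeff d‖ + (‖α‖ - 1) * ∑ i ∈ range d, ‖g.coeff i‖ ≤
      ‖α‖ * ‖g.coeff d‖ + ∑ i ∈ range d, ‖((X - C α) * g).coeff i‖ := by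
  cases d with
  | zero => simp [mul_coeff_zero]
  | succ d =>
    have norm_coeff_le :
        ‖((X - C α) * g).coeff (d + 1)‖ ≤ ‖g.coeff d‖ + ‖α‖ * ‖g.coeff (d + 1)‖ := by
      rw [sub_mul, coeff_sub, coeff_X_mul, coeff_C_mul, ← norm_mul]
      exact norm_sub_le _ _
    linarith [mul_sum_norm_coeff_sub_le_sum_norm_coeff_X_sub_C_mul α g d,
      sum_range_succ (fun i => ‖g.coeff i‖) d]

lemma sum_norm_coeff_lt_of_X_sub_C_mul {α : R} {g : R[X]} {d : ℕ} (hα : 1 ≤ ‖α‖)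
    (h : ‖g.coeff d‖ + ∑ i ∈ range d, ‖((X - C α) * g).coeff i‖ < ‖((X - C α) * g).coeff d‖) :
    ∑ i ∈ range d, ‖g.coeff i‖ < ‖g.coeff d‖ := by
  have norm_sub_one_mul_lt : (‖α‖ - 1) * ∑ i ∈ range d, ‖g.coeff i‖ < (‖α‖ - 1) * ‖g.coeff d‖ := by
    linarith [norm_coeff_X_sub_C_mul_add_le α g d]
  exact lt_of_mul_lt_mul_left norm_sub_one_mul_lt (sub_nonneg.2 hα)

lemma norm_lt_one_of_isRoot_of_sum_norm_coeff_lt [NormOneClass R] {g : R[X]} {β : R}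
    (hβ : g.IsRoot β)
    (h : ∑ i ∈ range g.natDegree, ‖g.coeff i‖ < ‖g.leadingCoeff‖) : ‖β‖ < 1 := by
  by_contra! one_le
  set d := g.natDegree
  have leading_term_eq : g.leadingCoeff * β ^ d = -∑ i ∈ range d, g.coeff i * β ^ i := by
    rw [IsRoot, eval_eq_sum_range, sum_range_succ] at hβ
    exact eq_neg_of_add_eq_zero_right hβ
  have norm_leading_term_le :
      ‖g.leadingCoeff‖ * ‖β‖ ^ d ≤ (∑ i ∈ range d, ‖g.coeff i‖) * ‖β‖ ^ d :=
    calc ‖g.leadingCoeff‖ * ‖β‖ ^ d = ‖∑ i ∈ range d, g.coeff i * β ^ i‖ := by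
          rw [← norm_pow, ← norm_mul, leading_term_eq, norm_neg]
      _ ≤ ∑ i ∈ range d, ‖g.coeff i‖ * ‖β‖ ^ i := by
          simpa only [norm_mul, norm_pow] using norm_sum_le (range d) fun i => g.coeff i * β ^ i
      _ ≤ ∑ i ∈ range d, ‖g.coeff i‖ * ‖β‖ ^ d := by
          gcongr with i hi
          exact (mem_range.1 hi).le
      _ = (∑ i ∈ range d, ‖g.coeff i‖) * ‖β‖ ^ d := (sum_mul ..).symm
  exact h.not_ge (le_of_mul_le_mul_right norm_leading_term_le (by positivity))

end NormedRing

section NormedField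

variable {K : Type*} [NormedField K]

lemma exists_isRoot_one_le_norm_of_splits {p : K[X]} (hp : p.Splits) (hd : p.natDegree ≠ 0)
    (h : ‖p.leadingCoeff‖ ≤ ‖p.coeff 0‖) : ∃ z, p.IsRoot z ∧ 1 ≤ ‖z‖ := by
  by_contra! norm_root_lt
  have roots_ne_zero : p.roots ≠ 0 := by
    rwa [← Multiset.card_pos, ← hp.natDegree_eq_card_roots, Nat.pos_iff_ne_zero]
  have norm_prod_lt : ‖p.roots.prod‖ < 1 :=
    Multiset.prod_induction_nonempty (‖·‖ < 1)
      (fun a b ha hb => norm_mul a b ▸ mul_lt_one_of_nonneg_of_lt_one_left (norm_nonneg a) ha hb.le)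
      roots_ne_zero fun z hz => norm_root_lt z (isRoot_of_mem_roots hz)
  have leadingCoeff_pos : 0 < ‖p.leadingCoeff‖ :=
    norm_pos_iff.2 (leadingCoeff_ne_zero.2 (ne_zero_of_natDegree_gt (Nat.pos_of_ne_zero hd)))
  refine h.not_gt ?_
  calc ‖p.coeff 0‖ = ‖p.leadingCoeff‖ * ‖p.roots.prod‖ := by
        simp [hp.coeff_zero_eq_leadingCoeff_mul_prod_roots]
    _ < ‖p.leadingCoeff‖ := mul_lt_of_lt_one_right leadingCoeff_pos norm_prod_lt

lemma norm_lt_one_of_isRoot_of_sum_norm_coeff_mul_lt {p q : K[X]} {α β : K} (hpq : (p * q).Monic)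
    (h : 1 + ∑ i ∈ range ((p * q).natDegree - 1), ‖(p * q).coeff i‖ <
      ‖(p * q).coeff ((p * q).natDegree - 1)‖)
    (hα : p.IsRoot α) (one_le : 1 ≤ ‖α‖) (hβ : q.IsRoot β) : ‖β‖ < 1 := by
  obtain ⟨r, rfl⟩ := dvd_iff_isRoot.2 hα
  rw [mul_assoc] at hpq h
  have monic : (r * q).Monic := (monic_X_sub_C α).of_mul_monic_left hpq
  have natDegree_sub_one : ((X - C α) * (r * q)).natDegree - 1 = (r * q).natDegree := by
    rw [(monic_X_sub_C α).natDegree_mul monic, natDegree_X_sub_C, Nat.add_sub_cancel_left]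
  rw [natDegree_sub_one, ← norm_one (α := K), ← monic.coeff_natDegree] at h
  exact norm_lt_one_of_isRoot_of_sum_norm_coeff_lt (root_mul_left_of_isRoot r hβ)
    (sum_norm_coeff_lt_of_X_sub_C_mul one_le h)

end NormedField

theorem perron_criterion_general {R K : Type*} [CommRing R] [NormedField K] [IsAlgClosed K]
    (φ : R →+* K) (hφ : ∀ a, a ≠ 0 → 1 ≤ ‖φ a‖) {f : R[X]} (hmonic : f.Monic)
    (h0 : f.coeff 0 ≠ 0)
    (h : 1 + ∑ i ∈ range (f.natDegree - 1), ‖φ (f.coeff i)‖ < ‖φ (f.coeff (f.natDegree - 1))‖) :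
    Irreducible f := by
  have injective : Function.Injective φ := (injective_iff_map_eq_zero φ).2 fun a ha => by
    by_contra ne_zero
    exact absurd (hφ a ne_zero) (by simp [ha])
  have : IsDomain R := injective.isDomain φ
  have exists_large_root {p : R[X]} (hp : p.Monic) (hd : p.natDegree ≠ 0) (hp0 : p.coeff 0 ≠ 0) :
      ∃ z, (p.map φ).IsRoot z ∧ 1 ≤ ‖z‖ :=
    exists_isRoot_one_le_norm_of_splits (IsAlgClosed.splits _) (by rwa [hp.natDegree_map])
      (by simpa [(hp.map φ).leadingCoeff] using hφ _ hp0)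
  refine hmonic.irreducible_iff_natDegree.2 ⟨?_, fun p q hp hq hpq => ?_⟩
  · rintro rfl
    simp at h
  · subst hpq
    by_contra! hd
    rw [mul_coeff_zero] at h0
    obtain ⟨α, hα, one_le_α⟩ := exists_large_root hp hd.1 (left_ne_zero_of_mul h0)
    obtain ⟨β, hβ, one_le_β⟩ := exists_large_root hq hd.2 (right_ne_zero_of_mul h0)
    refine one_le_β.not_gt
      (norm_lt_one_of_isRoot_of_sum_norm_coeff_mul_lt ?_ ?_ hα one_le_α hβ)
    · exact (hp.map φ).mul (hq.map φ)
    · simpa only [← Polynomial.map_mul, hmonic.natDegree_map, coeff_map] using h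

/-- Perron's irreducibility criterion. -/
theorem perron_criterion (f : Polynomial ℤ) (n : ℕ) (hn : 2 ≤ n)
    (hdeg : f.natDegree = n) (hmonic : f.Monic) (h0 : f.coeff 0 ≠ 0)
    (h : |f.coeff (n - 1)| > 1 + ∑ i ∈ Finset.range (n - 1), |f.coeff i|) :
    Irreducible f := by
  subst hdeg
  exact perron_criterion_general (Int.castRingHom ℂ)
    (fun a ha => by simpa using mod_cast Int.one_le_abs ha) hmonic h0 (by simpa using mod_cast h)
end

section
/- Let n ≥ 2 and ε ∈ {−1, +1}, and set f(X) = X^n + ε·(X + 1) = X^n + εX + ε ∈ ℤ[X]. If it is not the case that ε = 1 and n ≡ 2 (mod 3), then f is irreducible in ℤ[X]. If ε = 1 and n ≡ 2 (mod 3), then there exists g ∈ ℤ[X] such that X^n + X + 1 = (X^2 + X + 1)·g and either g = 1 or g is irreducible in ℤ[X]. -/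
open Polynomial

/-!
Ljunggren's method: a unit trinomial `f` is determined, up to sign and reciprocal, by the product
`f * f.mirror`. If `f = h * g` with `h` equal to its own reciprocal, then `g` inherits this
property, and a polynomial with this property is irreducible as soon as it is coprime to its
reciprocal.

A common complex root of `f = X ^ n + X + 1` and its reciprocal is a primitive cube root of unity
`ω`, and `ω` is a root of `f` exactly when `n ≡ 2 (mod 3)`. In that case `ω` is only a simple root,
so that dividing by `h = X ^ 2 + X + 1` removes all the common roots.
-/

section Mirror

variable {R : Type*} [Semiring R] [NoZeroDivisors R] {p q : R[X]}

theorem natDegree_eq_of_mul_mirror_eq (h : p * p.mirror = q * q.mirror) :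
    p.natDegree = q.natDegree := by
  simpa [natDegree_mul_mirror] using congrArg natDegree h

theorem natTrailingDegree_eq_of_mul_mirror_eq (h : p * p.mirror = q * q.mirror) :
    p.natTrailingDegree = q.natTrailingDegree := by
  simpa [natTrailingDegree_mul_mirror] using congrArg natTrailingDegree h

end Mirror

section UnitTrinomial

theorem trinomial_eq_or_eq_mirror_of_mul_mirror_eq {k m n k' m' n' : ℕ} (hkm : k < m) (hmn : m < n)
    (hkm' : k' < m') (hmn' : m' < n') {u v w x z : ℤˣ}
    (h : trinomial k m n (u : ℤ) v w * (trinomial k m n (u : ℤ) v w).mirror =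
      trinomial k' m' n' (x : ℤ) v z * (trinomial k' m' n' (x : ℤ) v z).mirror) :
    trinomial k' m' n' (x : ℤ) v z = trinomial k m n (u : ℤ) v w ∨
      trinomial k' m' n' (x : ℤ) v z = (trinomial k m n (u : ℤ) v w).mirror := by
  obtain rfl : k = k' := by
    simpa only [trinomial_natTrailingDegree hkm hmn u.ne_zero,
      trinomial_natTrailingDegree hkm' hmn' x.ne_zero] using
      natTrailingDegree_eq_of_mul_mirror_eq h
  obtain rfl : n = n' := by
    simpa only [trinomial_natDegree hkm hmn w.ne_zero,
      trinomial_natDegree hkm' hmn' z.ne_zero] using natDegree_eq_of_mul_mirror_eq h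
  exact IsUnitTrinomial.irreducible_aux3 hkm hmn hkm' hmn' u v w x z rfl rfl h

theorem neg_trinomial {R : Type*} [Ring R] (k m n : ℕ) (u v w : R) :
    -trinomial k m n u v w = trinomial k m n (-u) (-v) (-w) := by
  simp only [trinomial_def, C_neg, neg_mul, neg_add]

theorem eq_or_eq_mirror_of_mul_mirror_eq {p q : ℤ[X]} (hp : p.IsUnitTrinomial)
    (h : p * p.mirror = q * q.mirror) :
    q = p ∨ q = -p ∨ q = p.mirror ∨ q = -p.mirror := by
  have hq : q.IsUnitTrinomial := (isUnitTrinomial_iff'' h).mp hp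
  obtain ⟨k, m, n, hkm, hmn, u, v, w, rfl⟩ := hp
  obtain ⟨k', m', n', hkm', hmn', x, y, z, rfl⟩ := hq
  rcases Int.isUnit_eq_or_eq_neg v.isUnit y.isUnit with hvy | hvy
  · rw [← hvy] at h ⊢
    have := trinomial_eq_or_eq_mirror_of_mul_mirror_eq hkm hmn hkm' hmn' h
    tauto
  · have hneg : -trinomial k' m' n' (x : ℤ) y z =
        trinomial k' m' n' ((-x : ℤˣ) : ℤ) v ((-z : ℤˣ) : ℤ) := by
      rw [neg_trinomial, hvy, Units.val_neg, Units.val_neg]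
    have := trinomial_eq_or_eq_mirror_of_mul_mirror_eq hkm hmn hkm' hmn'
      (by rw [← hneg, mirror_neg, neg_mul_neg, h])
    rw [← hneg, neg_eq_iff_eq_neg, neg_eq_iff_eq_neg] at this
    tauto

theorem irreducible_of_isUnitTrinomial_mul {h g : ℤ[X]} (hhg : (h * g).IsUnitTrinomial)
    (hh : h.mirror = h) (hg : ¬IsUnit g) (hrel : IsRelPrime g g.mirror) : Irreducible g := by
  have hh0 : h ≠ 0 := left_ne_zero_of_mul hhg.ne_zero
  have mirror_mul (k : ℤ[X]) : (h * k).mirror = h * k.mirror := by rw [mirror_mul_of_domain, hh]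
  refine irreducible_of_mirror hg (fun k hk => ?_) hrel
  have hprod : h * g * (h * g).mirror = h * k * (h * k).mirror := by
    rw [mirror_mul, mirror_mul, mul_mul_mul_comm, hk, mul_mul_mul_comm]
  simpa only [mirror_mul, ← mul_neg, mul_right_inj' hh0] using
    eq_or_eq_mirror_of_mul_mirror_eq hhg hprod

end UnitTrinomial

theorem isRelPrime_of_forall_aeval_ne_zero {R : Type*} (K : Type*) [CommRing R]
    [Field K] [IsAlgClosed K] [Algebra R K] [FaithfulSMul R K] {p q : R[X]}
    (hp : p.IsPrimitive) (h : ∀ z : K, aeval z p = 0 → aeval z q ≠ 0) : IsRelPrime p q := by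
  intro d hdp hdq
  have hcop : IsCoprime (p.map (algebraMap R K)) (q.map (algebraMap R K)) := by
    rw [isCoprime_iff_aeval_ne_zero_of_isAlgClosed K K]
    intro z
    simpa only [aeval_map_algebraMap, imp_iff_not_or] using h z
  have hunit : IsUnit (d.map (algebraMap R K)) :=
    hcop.isUnit_of_dvd' (Polynomial.map_dvd _ hdp) (Polynomial.map_dvd _ hdq)
  exact ((isPrimitive_of_dvd hp hdp).isUnit_iff_isUnit_map_of_injective
    (FaithfulSMul.algebraMap_injective R K)).mpr hunit

section CubeRoot

variable {K : Type*} [CommRing K] [IsDomain K] [NeZero (3 : K)] {z : K}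

theorem isPrimitiveRoot_three_of_sq_add_self_add_one_eq_zero (hz : z ^ 2 + z + 1 = 0) :
    IsPrimitiveRoot z 3 := by
  have : NeZero ((3 : ℕ) : K) := ⟨by exact_mod_cast NeZero.ne (3 : K)⟩
  rw [← isRoot_cyclotomic_iff, cyclotomic_three]
  simpa using hz

theorem mod_three_eq_two_of_pow_add_self_add_one_eq_zero {n : ℕ} (hz : z ^ 2 + z + 1 = 0)
    (hzn : z ^ n + z + 1 = 0) : n % 3 = 2 := by
  have hprim := isPrimitiveRoot_three_of_sq_add_self_add_one_eq_zero hz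
  have hpow : z ^ n = z ^ 2 := by linear_combination hzn - hz
  rwa [(hprim.isOfFinOrder three_ne_zero).pow_inj_mod, ← hprim.eq_orderOf] at hpow

end CubeRoot

section Selmer

theorem X_pow_add_X_add_one_eq_trinomial (R : Type*) [Semiring R] (n : ℕ) :
    (X ^ n + X + 1 : R[X]) = trinomial 0 1 n 1 1 1 := by
  simp only [trinomial_def, C_1, one_mul, pow_zero, pow_one]
  abel

theorem sq_add_X_add_one_dvd_X_pow_add_X_add_one (R : Type*) [CommRing R] {n : ℕ}
    (hn : n % 3 = 2) : (X ^ 2 + X + 1 : R[X]) ∣ X ^ n + X + 1 := by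
  obtain ⟨k, rfl⟩ : ∃ k, n = 3 * k + 2 := ⟨n / 3, by lia⟩
  have hcube : (X ^ 2 + X + 1 : R[X]) ∣ X ^ 3 - 1 := ⟨X - 1, by ring⟩
  have hsplit : (X ^ (3 * k + 2) + X + 1 : R[X]) =
      ((X ^ 3) ^ k - 1) * X ^ 2 + (X ^ 2 + X + 1) := by ring
  rw [hsplit]
  exact dvd_add ((hcube.trans (sub_one_dvd_pow_sub_one _ k)).mul_right _) dvd_rfl

variable {n : ℕ}

theorem monic_X_pow_add_X_add_one (R : Type*) [Semiring R] (hn : 1 < n) :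
    (X ^ n + X + 1 : R[X]).Monic := by
  rw [X_pow_add_X_add_one_eq_trinomial]
  exact trinomial_monic zero_lt_one hn

theorem isUnitTrinomial_X_pow_add_X_add_one (hn : 1 < n) :
    (X ^ n + X + 1 : ℤ[X]).IsUnitTrinomial :=
  ⟨0, 1, n, zero_lt_one, hn, 1, 1, 1, X_pow_add_X_add_one_eq_trinomial ℤ n⟩

theorem mirror_X_pow_add_X_add_one (R : Type*) [Semiring R] (hn : 1 < n) :
    (X ^ n + X + 1 : R[X]).mirror = X ^ n + X ^ (n - 1) + 1 := by
  nontriviality R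
  rw [X_pow_add_X_add_one_eq_trinomial, trinomial_mirror zero_lt_one hn one_ne_zero one_ne_zero]
  simp only [trinomial_def, C_1, one_mul, pow_zero, add_zero]
  abel

theorem sq_add_self_add_one_eq_zero_of_aeval_mirror_eq_zero {A : Type*} [CommRing A] (hn : 1 < n)
    {z : A} (hz : z ^ n + z + 1 = 0) (hz' : aeval z (X ^ n + X + 1 : ℤ[X]).mirror = 0) :
    z ^ 2 + z + 1 = 0 := by
  obtain ⟨m, rfl⟩ := Nat.exists_eq_add_of_le' hn.le
  simp only [mirror_X_pow_add_X_add_one ℤ hn, map_add, map_pow, aeval_X, map_one,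
    Nat.add_sub_cancel] at hz'
  linear_combination (z + 1) * hz - z * hz'

theorem irreducible_X_pow_add_X_add_one (hn : 1 < n) (hn3 : n % 3 ≠ 2) :
    Irreducible (X ^ n + X + 1 : ℤ[X]) := by
  refine (isUnitTrinomial_X_pow_add_X_add_one hn).irreducible_of_coprime' ?_
  rintro z ⟨hz, hz'⟩
  replace hz : z ^ n + z + 1 = 0 := by simpa using hz
  exact hn3 (mod_three_eq_two_of_pow_add_self_add_one_eq_zero
    (sq_add_self_add_one_eq_zero_of_aeval_mirror_eq_zero hn hz hz') hz)

-- The left-hand side is the derivative of `X ^ n + X + 1` at `z`.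
theorem natCast_mul_pow_pred_add_one_ne_zero (hn : n ≠ 1) {z : ℂ} (hz : z ^ 2 + z + 1 = 0) :
    n * z ^ (n - 1) + 1 ≠ 0 := by
  intro hderiv
  have hnorm : ‖z‖ = 1 :=
    (isPrimitiveRoot_three_of_sq_add_self_add_one_eq_zero hz).norm'_eq_one three_ne_zero
  have hn1 : (n : ℝ) = 1 := by
    simpa [hnorm] using congrArg norm (eq_neg_of_add_eq_zero_left hderiv)
  exact hn (by exact_mod_cast hn1)

variable {g : ℤ[X]}

theorem aeval_cofactor_ne_zero (hn : n ≠ 1) (hg : (X ^ n + X + 1 : ℤ[X]) = (X ^ 2 + X + 1) * g)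
    {z : ℂ} (hz : z ^ 2 + z + 1 = 0) : aeval z g ≠ 0 := by
  intro hgz
  have hderiv : n * z ^ (n - 1) + 1 = 0 := by
    simpa [derivative_X_pow, hgz, hz] using congrArg (fun p => aeval z (derivative p)) hg
  exact natCast_mul_pow_pred_add_one_ne_zero hn hz hderiv

theorem monic_cofactor (hn : 1 < n) (hg : (X ^ n + X + 1 : ℤ[X]) = (X ^ 2 + X + 1) * g) :
    g.Monic :=
  (monic_X_pow_add_X_add_one ℤ one_lt_two).of_mul_monic_left
    (hg ▸ monic_X_pow_add_X_add_one ℤ hn)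

theorem isRelPrime_cofactor_mirror (hn : 1 < n)
    (hg : (X ^ n + X + 1 : ℤ[X]) = (X ^ 2 + X + 1) * g) : IsRelPrime g g.mirror := by
  refine isRelPrime_of_forall_aeval_ne_zero ℂ (monic_cofactor hn hg).isPrimitive
    fun z hgz hgz' => ?_
  have hz : z ^ n + z + 1 = 0 := by simpa [hgz] using congrArg (aeval z) hg
  have hz' : aeval z (X ^ n + X + 1 : ℤ[X]).mirror = 0 := by
    rw [hg, mirror_mul_of_domain, map_mul, hgz', mul_zero]
  exact aeval_cofactor_ne_zero hn.ne' hg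
    (sq_add_self_add_one_eq_zero_of_aeval_mirror_eq_zero hn hz hz') hgz

theorem cofactor_eq_one_or_irreducible (hn : 1 < n)
    (hg : (X ^ n + X + 1 : ℤ[X]) = (X ^ 2 + X + 1) * g) : g = 1 ∨ Irreducible g := by
  by_cases hunit : IsUnit g
  · exact .inl ((monic_cofactor hn hg).eq_one_of_isUnit hunit)
  · have hself : (X ^ 2 + X + 1 : ℤ[X]).mirror = X ^ 2 + X + 1 := by
      simpa using mirror_X_pow_add_X_add_one ℤ one_lt_two
    exact .inr (irreducible_of_isUnitTrinomial_mul (hg ▸ isUnitTrinomial_X_pow_add_X_add_one hn)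
      hself hunit (isRelPrime_cofactor_mirror hn hg))

end Selmer

/-- Selmer's theorem on the trinomials `X^n + ε·(X + 1)`. -/
theorem selmer_trinomial (n : ℕ) (hn : 2 ≤ n) (ε : ℤ) (hε : ε = 1 ∨ ε = -1) :
    (¬ (ε = 1 ∧ n % 3 = 2) →
      Irreducible ((X : Polynomial ℤ) ^ n + C ε * X + C ε)) ∧
    ((ε = 1 ∧ n % 3 = 2) →
      ∃ g : Polynomial ℤ,
        (X : Polynomial ℤ) ^ n + X + 1 = (X ^ 2 + X + 1) * g ∧
        (g = 1 ∨ Irreducible g)) := by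
  constructor
  · intro hexc
    rcases hε with rfl | rfl
    · simpa using irreducible_X_pow_add_X_add_one hn fun hn3 => hexc ⟨rfl, hn3⟩
    · have hirr : Irreducible (X ^ n - X - 1 : ℤ[X]) :=
        X_pow_sub_X_sub_one_irreducible (by lia)
      simpa [sub_eq_add_neg] using hirr
  · rintro ⟨-, hn3⟩
    obtain ⟨g, hg⟩ := sq_add_X_add_one_dvd_X_pow_add_X_add_one ℤ hn3
    exact ⟨g, hg, cofactor_eq_one_or_irreducible hn hg⟩
end

section
/- Let n, m be positive integers with n > 2m, write m = 2^a·3^b·m₁ and n − 2m = 2^p·3^q·n₁ with a, b, p, q ≥ 0 and gcd(m₁·n₁, 6) = 1. Let ε₁, ε₂ ∈ {−1, +1} with ε₁ + ε₂ ≠ 2, and set f(X) = X^n + ε₁X^m + ε₂ ∈ ℤ[X]. If f is reducible in ℤ[X], then q > b, the polynomial X^{2g} − X^{g} + 1 divides f where g = gcd(n, m), and one of the following holds: (i) ε₁ = 1, ε₂ = −1 and a = p; (ii) ε₁ = −1, ε₂ = 1 and a < p; (iii) ε₁ = −1, ε₂ = −1 and a > p. -/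
open Polynomial

/-!
Write `k = n - 2m` and `g = gcd(n, m) = gcd(k, m)`. By the unit-trinomial criterion, a reducible `f`
shares a complex root `z` with its reciprocal polynomial. Eliminating between the two equations
gives `z ^ k = ε₂` and `w² + ε₁ε₂w + 1 = 0` for `w = z ^ m`, so that `w³ = ε₁ε₂` and `w² ≠ 1`. As
`k / g` and `m / g` are coprime, these relations force `z ^ g` to be a primitive sixth root of unity
once `(ε₁, ε₂) ≠ (1, 1)`. Hence `Φ₆(X ^ g)` divides `f`, and `z ^ j = 1` is equivalent to
`6 ∣ j / g` for every multiple `j` of `g`. Taking `j = 2k`, `3k` and `3m`, the relation `ε₂² = 1`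
becomes `b < q`, and the conditions `ε₂ = 1` and `ε₁ε₂ = 1` become `a < p` and `p < a`.
-/

theorem prime_dvd_div_gcd_iff {r i j : ℕ} (hr : r.Prime) (hi : i ≠ 0) (hj : j ≠ 0) :
    r ∣ i / i.gcd j ↔ j.factorization r < i.factorization r := by
  have hquot : i / i.gcd j ≠ 0 := Nat.div_ne_zero_iff.2
    ⟨Nat.gcd_ne_zero_left hi, Nat.gcd_le_left j (Nat.pos_of_ne_zero hi)⟩
  rw [hr.dvd_iff_one_le_factorization hquot, Nat.factorization_div (Nat.gcd_dvd_left i j),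
    Nat.factorization_gcd hi hj, Finsupp.tsub_apply, Finsupp.inf_apply]
  omega

theorem factorization_prime_pow_mul {r c : ℕ} (hr : r.Prime) (hc : r.Coprime c) (i : ℕ) :
    (r ^ i * c).factorization r = i := by
  rw [Nat.factorization_mul_apply_of_coprime (hc.pow_left i), Nat.factorization_pow_self hr,
    Nat.factorization_eq_zero_of_not_dvd (hr.coprime_iff_not_dvd.1 hc), add_zero]

theorem factorization_two_pow_mul_three_pow_mul {c : ℕ} (hc : c.Coprime 6) (i j : ℕ) :
    (2 ^ i * 3 ^ j * c).factorization 2 = i ∧ (2 ^ i * 3 ^ j * c).factorization 3 = j := by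
  have hcop2 : Nat.Coprime 2 (3 ^ j * c) :=
    (Nat.Coprime.pow_right j (by norm_num)).mul_right (hc.coprime_dvd_right (by norm_num)).symm
  have hcop3 : Nat.Coprime 3 (2 ^ i * c) :=
    (Nat.Coprime.pow_right i (by norm_num)).mul_right (hc.coprime_dvd_right (by norm_num)).symm
  constructor
  · rw [mul_assoc, factorization_prime_pow_mul Nat.prime_two hcop2]
  · rw [mul_comm (2 ^ i), mul_assoc, factorization_prime_pow_mul Nat.prime_three hcop3]

section PrimitiveRoot

theorem pow_eq_one_iff_dvd_div {M : Type*} [CommMonoid M] {z : M} {g r i : ℕ}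
    (hz : IsPrimitiveRoot (z ^ g) r) (hgi : g ∣ i) : z ^ i = 1 ↔ r ∣ i / g := by
  rw [← hz.pow_eq_one_iff_dvd, ← pow_mul, Nat.mul_div_cancel' hgi]

section SixthRoot

variable {M : Type*} [CommMonoid M] {z : M} {i j : ℕ} (hi : i ≠ 0) (hj : j ≠ 0)
  (hz : IsPrimitiveRoot (z ^ i.gcd j) 6)
include hi hj hz

theorem pow_two_mul_eq_one_iff_factorization_three_lt :
    z ^ (2 * i) = 1 ↔ j.factorization 3 < i.factorization 3 := by
  rw [pow_eq_one_iff_dvd_div hz ((Nat.gcd_dvd_left i j).mul_left 2),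
    Nat.mul_div_assoc 2 (Nat.gcd_dvd_left i j), ← prime_dvd_div_gcd_iff Nat.prime_three hi hj]
  omega

theorem pow_three_mul_eq_one_iff_factorization_two_lt :
    z ^ (3 * i) = 1 ↔ j.factorization 2 < i.factorization 2 := by
  rw [pow_eq_one_iff_dvd_div hz ((Nat.gcd_dvd_left i j).mul_left 3),
    Nat.mul_div_assoc 3 (Nat.gcd_dvd_left i j), ← prime_dvd_div_gcd_iff Nat.prime_two hi hj]
  omega

end SixthRoot

section Quadratic

variable {R : Type*} [CommRing R] {w δ : R} (hδ : δ ^ 2 = 1) (hw : w ^ 2 + δ * w + 1 = 0)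
include hδ hw

theorem pow_three_eq_of_sq_add_mul_add_one_eq_zero : w ^ 3 = δ := by
  linear_combination (w - δ) * hw + w * hδ

theorem sq_ne_one_of_sq_add_mul_add_one_eq_zero (h3 : (3 : R) ≠ 0) : w ^ 2 ≠ 1 := by
  intro hw2
  apply h3
  linear_combination (2 - δ * w) * hw + (δ * w - 1) * hw2 + w ^ 2 * hδ

end Quadratic

theorem isPrimitiveRoot_six_of_coprime {R : Type*} [CommRing R] (h3 : (3 : R) ≠ 0)
    {y δ ε : R} {k m : ℕ} (hkm : k.Coprime m) (hδ : δ ^ 2 = 1) (hε : ε ^ 2 = 1) (hk : y ^ k = ε)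
    (hm : (y ^ m) ^ 2 + δ * y ^ m + 1 = 0) (hne : ¬ (ε = 1 ∧ δ = 1)) : IsPrimitiveRoot y 6 := by
  have hcube : (y ^ m) ^ 3 = δ := pow_three_eq_of_sq_add_mul_add_one_eq_zero hδ hm
  have hy2 : y ^ 2 ≠ 1 := fun h =>
    sq_ne_one_of_sq_add_mul_add_one_eq_zero hδ hm h3 (by rw [pow_right_comm, h, one_pow])
  have hord : orderOf y ∣ 2 * k.gcd 3 := by
    rw [← hkm.symm.gcd_mul_right_cancel_right 3, ← Nat.gcd_mul_left]
    apply Nat.dvd_gcd <;> apply orderOf_dvd_of_pow_eq_one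
    · rw [mul_comm, pow_mul, hk, hε]
    · rw [show 2 * (3 * m) = m * 3 * 2 by ring, pow_mul, pow_mul, hcube, hδ]
  have h3k : 3 ∣ k := by
    by_contra h
    rw [Nat.gcd_comm, (Nat.prime_three.coprime_iff_not_dvd.2 h).gcd_eq_one] at hord
    exact hy2 (orderOf_dvd_iff_pow_eq_one.1 hord)
  have hy3 : y ^ 3 ≠ 1 := by
    intro h
    obtain ⟨j, rfl⟩ := h3k
    exact hne ⟨by rw [← hk, pow_mul, h, one_pow], by rw [← hcube, pow_right_comm, h, one_pow]⟩
  rw [Nat.gcd_eq_right h3k] at hord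
  rw [IsPrimitiveRoot.iff_orderOf]
  refine orderOf_eq_of_pow_and_pow_div_prime (by norm_num)
    (orderOf_dvd_iff_pow_eq_one.1 hord) fun r hr hr6 => ?_
  obtain rfl | rfl : r = 2 ∨ r = 3 := by
    simpa [Nat.prime_dvd_prime_iff_eq hr, Nat.prime_two, Nat.prime_three] using
      hr.dvd_mul.1 (show r ∣ 2 * 3 from hr6)
  · exact hy3
  · exact hy2

theorem isPrimitiveRoot_pow_gcd_six {R : Type*} [CommRing R] (h3 : (3 : R) ≠ 0) {z δ ε : R}
    {k m : ℕ} (hm0 : 0 < m) (hδ : δ ^ 2 = 1) (hε : ε ^ 2 = 1) (hk : z ^ k = ε)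
    (hm : (z ^ m) ^ 2 + δ * z ^ m + 1 = 0) (hne : ¬ (ε = 1 ∧ δ = 1)) :
    IsPrimitiveRoot (z ^ k.gcd m) 6 := by
  refine isPrimitiveRoot_six_of_coprime h3
    (Nat.coprime_div_gcd_div_gcd (Nat.gcd_pos_of_pos_right k hm0)) hδ hε ?_ ?_ hne
  · rw [← pow_mul, Nat.mul_div_cancel' (Nat.gcd_dvd_left k m), hk]
  · rwa [← pow_mul z, Nat.mul_div_cancel' (Nat.gcd_dvd_right k m)]

end PrimitiveRoot

section Divisibility

theorem cyclotomic_dvd_of_aeval_eq_zero {K : Type*} [Field K] [CharZero K] {μ : K} {r : ℕ}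
    (hr : 0 < r) (hμ : IsPrimitiveRoot μ r) {f : ℤ[X]} (hf : aeval μ f = 0) :
    cyclotomic r ℤ ∣ f := by
  rw [cyclotomic_eq_minpoly hμ hr]
  exact minpoly.isIntegrallyClosed_dvd (hμ.isIntegral hr) hf

theorem expand_cyclotomic_dvd_trinomial {K : Type*} [Field K] [CharZero K] {z : K}
    {g r n m : ℕ} {c d : ℤ} (hr : 0 < r) (hz : IsPrimitiveRoot (z ^ g) r) (hgn : g ∣ n)
    (hgm : g ∣ m) (hroot : aeval z ((X : ℤ[X]) ^ n + C c * X ^ m + C d) = 0) :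
    expand ℤ g (cyclotomic r ℤ) ∣ X ^ n + C c * X ^ m + C d := by
  obtain ⟨n', rfl⟩ := hgn
  obtain ⟨m', rfl⟩ := hgm
  have hexpand : expand ℤ g (X ^ n' + C c * X ^ m' + C d) =
      X ^ (g * n') + C c * X ^ (g * m') + C d := by
    simp [pow_mul]
  rw [← hexpand] at hroot ⊢
  rw [expand_aeval] at hroot
  exact _root_.map_dvd (expand ℤ g) (cyclotomic_dvd_of_aeval_eq_zero hr hz hroot)

theorem expand_cyclotomic_six (R : Type*) [CommRing R] (g : ℕ) :
    expand R g (cyclotomic 6 R) = X ^ (2 * g) - X ^ g + 1 := by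
  simp [cyclotomic_six, mul_comm 2 g, pow_mul]

end Divisibility

section Trinomial

theorem intCast_units_sq {R : Type*} [Ring R] (ε : ℤˣ) : ((ε : ℤ) : R) ^ 2 = 1 := by
  rw [← Int.cast_pow, ← Units.val_pow_eq_pow_val, Int.units_sq, Units.val_one, Int.cast_one]

theorem aeval_trinomial {R A : Type*} [CommSemiring R] [Semiring A] [Algebra R A] (z : A)
    (k m n : ℕ) (u v w : R) :
    aeval z (trinomial k m n u v w) =
      algebraMap R A u * z ^ k + algebraMap R A v * z ^ m + algebraMap R A w * z ^ n := by
  simp [trinomial]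

-- For `t = z ^ k` and `w = z ^ m` the last two hypotheses say that `z` is a root of
-- `X ^ (k + 2 * m) + e₁ X ^ m + e₂` and of its mirror.
theorem eq_and_sq_add_mul_add_one_eq_zero {R : Type*} [CommRing R] {t w e₁ e₂ : R}
    (he₁ : e₁ ^ 2 = 1) (he₂ : e₂ ^ 2 = 1) (hf : t * w ^ 2 + e₁ * w + e₂ = 0)
    (hmirror : e₂ * t * w ^ 2 + e₁ * t * w + 1 = 0) :
    t = e₂ ∧ w ^ 2 + e₁ * e₂ * w + 1 = 0 := by
  have hmul : w * (t - e₂) = 0 := by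
    linear_combination e₁ * (hmirror - e₂ * hf) + e₁ * he₂ - w * (t - e₂) * he₁
  -- `hf` makes `w` a unit, with inverse `-e₂ * (t * w + e₁)`.
  have ht : t = e₂ := by
    linear_combination -e₂ * (t * w + e₁) * hmul + e₂ * (t - e₂) * hf - (t - e₂) * he₂
  subst ht
  exact ⟨rfl, by linear_combination t * hf - (w ^ 2 + 1) * he₂⟩

theorem exists_root_of_not_irreducible {k m : ℕ} (hm : 0 < m) {ε₁ ε₂ : ℤˣ}
    (hred : ¬ Irreducible ((X : ℤ[X]) ^ (k + 2 * m) + C (ε₁ : ℤ) * X ^ m + C (ε₂ : ℤ))) :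
    ∃ z : ℂ, aeval z ((X : ℤ[X]) ^ (k + 2 * m) + C (ε₁ : ℤ) * X ^ m + C (ε₂ : ℤ)) = 0 ∧
      z ^ k = (ε₂ : ℤ) ∧ (z ^ m) ^ 2 + ((ε₁ * ε₂ : ℤˣ) : ℤ) * z ^ m + 1 = 0 := by
  have hmn : m < k + 2 * m := by omega
  have htri : (X : ℤ[X]) ^ (k + 2 * m) + C (ε₁ : ℤ) * X ^ m + C (ε₂ : ℤ) =
      trinomial 0 m (k + 2 * m) (ε₂ : ℤ) ε₁ ((1 : ℤˣ) : ℤ) := by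
    simp only [trinomial, Units.val_one, C_1]; ring
  rw [htri] at hred ⊢
  contrapose! hred
  refine IsUnitTrinomial.irreducible_of_coprime' ⟨0, m, k + 2 * m, hm, hmn, ε₂, ε₁, 1, rfl⟩ ?_
  rintro z ⟨hf, hmirror⟩
  have hsub : k + 2 * m - m + 0 = k + m := by omega
  rw [trinomial_mirror hm hmn ε₂.ne_zero (1 : ℤˣ).ne_zero, hsub] at hmirror
  have hroot := hf
  simp only [aeval_trinomial, algebraMap_int_eq, eq_intCast, Units.val_one, Int.cast_one]
    at hf hmirror
  obtain ⟨ht, hw⟩ := eq_and_sq_add_mul_add_one_eq_zero (t := z ^ k) (w := z ^ m)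
    (intCast_units_sq ε₁) (intCast_units_sq ε₂)
    (by linear_combination hf) (by linear_combination hmirror)
  exact hred z hroot ht (by push_cast; exact hw)

theorem exists_isPrimitiveRoot_six_of_not_irreducible {k m : ℕ} (hm : 0 < m) {ε₁ ε₂ : ℤˣ}
    (hne : ¬ (ε₁ = 1 ∧ ε₂ = 1))
    (hred : ¬ Irreducible ((X : ℤ[X]) ^ (k + 2 * m) + C (ε₁ : ℤ) * X ^ m + C (ε₂ : ℤ))) :
    ∃ z : ℂ, aeval z ((X : ℤ[X]) ^ (k + 2 * m) + C (ε₁ : ℤ) * X ^ m + C (ε₂ : ℤ)) = 0 ∧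
      IsPrimitiveRoot (z ^ k.gcd m) 6 ∧ z ^ (2 * k) = 1 ∧ z ^ (3 * k) = (ε₂ : ℤ) ∧
      z ^ (3 * m) = ((ε₁ * ε₂ : ℤˣ) : ℤ) := by
  obtain ⟨z, hroot, hk, hquad⟩ := exists_root_of_not_irreducible hm hred
  have hδ : (((ε₁ * ε₂ : ℤˣ) : ℤ) : ℂ) ^ 2 = 1 := intCast_units_sq _
  have hε : ((ε₂ : ℤ) : ℂ) ^ 2 = 1 := intCast_units_sq _
  refine ⟨z, hroot, isPrimitiveRoot_pow_gcd_six (by norm_num) hm hδ hε hk hquad ?_, ?_, ?_, ?_⟩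
  · simp only [Int.cast_eq_one, Units.val_eq_one]
    rintro ⟨rfl, h⟩
    exact hne ⟨by rwa [mul_one] at h, rfl⟩
  · rw [mul_comm, pow_mul, hk, hε]
  · rw [mul_comm, pow_mul, hk, pow_succ, hε, one_mul]
  · rw [mul_comm, pow_mul, pow_three_eq_of_sq_add_mul_add_one_eq_zero hδ hquad]

theorem dvd_and_factorization_of_not_irreducible {k m : ℕ} (hk : k ≠ 0) (hm : 0 < m)
    {ε₁ ε₂ : ℤˣ} (hne : ¬ (ε₁ = 1 ∧ ε₂ = 1))
    (hred : ¬ Irreducible ((X : ℤ[X]) ^ (k + 2 * m) + C (ε₁ : ℤ) * X ^ m + C (ε₂ : ℤ))) :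
    expand ℤ (k.gcd m) (cyclotomic 6 ℤ) ∣
        X ^ (k + 2 * m) + C (ε₁ : ℤ) * X ^ m + C (ε₂ : ℤ) ∧
      m.factorization 3 < k.factorization 3 ∧
      (ε₂ = 1 ↔ m.factorization 2 < k.factorization 2) ∧
      (ε₁ * ε₂ = 1 ↔ k.factorization 2 < m.factorization 2) := by
  obtain ⟨z, hroot, hz, hz2k, hz3k, hz3m⟩ :=
    exists_isPrimitiveRoot_six_of_not_irreducible hm hne hred
  have hz' : IsPrimitiveRoot (z ^ m.gcd k) 6 := by rwa [Nat.gcd_comm]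
  have hgm := Nat.gcd_dvd_right k m
  have hgn := (Nat.gcd_dvd_left k m).add (hgm.mul_left 2)
  refine ⟨expand_cyclotomic_dvd_trinomial (by norm_num) hz hgn hgm hroot,
    (pow_two_mul_eq_one_iff_factorization_three_lt hk hm.ne' hz).1 hz2k, ?_, ?_⟩
  · rw [← pow_three_mul_eq_one_iff_factorization_two_lt hk hm.ne' hz, hz3k,
      Int.cast_eq_one, Units.val_eq_one]
  · rw [← pow_three_mul_eq_one_iff_factorization_two_lt hm.ne' hk hz', hz3m,
      Int.cast_eq_one, Units.val_eq_one]

end Trinomial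

/-- Koley–Reddy's corrected form of Ljunggren's theorem for `X^n + ε₁X^m + ε₂`
with `(ε₁, ε₂) ≠ (1, 1)`. -/
theorem koley_reddy_trinomial (n m : ℕ) (hm : 0 < m) (hnm : 2 * m < n)
    (a b p q m₁ n₁ : ℕ) (hmfact : m = 2 ^ a * 3 ^ b * m₁)
    (hnfact : n - 2 * m = 2 ^ p * 3 ^ q * n₁)
    (hcop : Nat.gcd (m₁ * n₁) 6 = 1)
    (ε₁ ε₂ : ℤ) (hε₁ : ε₁ = 1 ∨ ε₁ = -1) (hε₂ : ε₂ = 1 ∨ ε₂ = -1)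
    (hne : ε₁ + ε₂ ≠ 2)
    (hred : ¬ Irreducible ((X : Polynomial ℤ) ^ n + C ε₁ * X ^ m + C ε₂)) :
    b < q ∧
    ((X : Polynomial ℤ) ^ (2 * Nat.gcd n m) - X ^ (Nat.gcd n m) + 1) ∣
      ((X : Polynomial ℤ) ^ n + C ε₁ * X ^ m + C ε₂) ∧
    ((ε₁ = 1 ∧ ε₂ = -1 ∧ a = p) ∨
     (ε₁ = -1 ∧ ε₂ = 1 ∧ a < p) ∨
     (ε₁ = -1 ∧ ε₂ = -1 ∧ p < a)) := by
  lift ε₁ to ℤˣ using Int.isUnit_iff.2 hε₁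
  lift ε₂ to ℤˣ using Int.isUnit_iff.2 hε₂
  obtain ⟨k, rfl⟩ := Nat.exists_eq_add_of_le' hnm.le
  rw [Nat.add_sub_cancel] at hnfact
  rw [Nat.gcd_add_mul_right_left, ← expand_cyclotomic_six]
  obtain ⟨hdvd, hbq, hap, hpa⟩ := dvd_and_factorization_of_not_irreducible (k := k) (by omega) hm
    (by rintro ⟨rfl, rfl⟩; exact hne rfl) hred
  have hm₁ : m₁.Coprime 6 := Nat.Coprime.coprime_mul_right hcop
  have hn₁ : n₁.Coprime 6 := Nat.Coprime.coprime_mul_left hcop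
  obtain ⟨ha, hb⟩ := hmfact ▸ factorization_two_pow_mul_three_pow_mul hm₁ a b
  obtain ⟨hp, hq⟩ := hnfact ▸ factorization_two_pow_mul_three_pow_mul hn₁ p q
  rw [hb, hq] at hbq
  rw [ha, hp] at hap hpa
  refine ⟨hbq, hdvd, ?_⟩
  rcases Int.units_eq_one_or ε₁ with rfl | rfl <;> rcases Int.units_eq_one_or ε₂ with rfl | rfl <;>
    simp at hne hap hpa ⊢ <;> omega
end

section
/- Let n > m > 0 be integers and ε₁, ε₂ ∈ {−1, +1}, and set f(X) = X^n + 2ε₁X^m + ε₂ ∈ ℤ[X]. Assume there is no positive integer k such that (n, m, ε₁, ε₂) is one of: (7k, 2k, −1, +1), (7k, 5k, −1, +1), (7k, 2k, +1, −1), (7k, 5k, −1, −1), (7k, 3k, +1, +1), (7k, 4k, +1, +1), (7k, 3k, +1, −1), (7k, 4k, −1, −1). Then there exist a multiset S of positive integers and g ∈ ℤ[X] such that f = (∏_{i ∈ S} Φ_i(X))·g and either g = 1 or g is irreducible in ℤ[X]. -/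
open Polynomial

/-!
Let `f` be the trinomial and `p.mirror` the reciprocal of a polynomial `p`. If `f = p * q`, then
`F = p.mirror * q` satisfies `F * F.mirror = f * f.mirror`, so the coefficient sequences of `F` and
`f` have the same autocorrelations. At lag `0` this says that the squares of the coefficients of `F`
sum to `1 + 4 + 1 = 6`. Hence `F` either is a trinomial of the same kind, which forces `F` to be
`f` or `f.mirror` up to sign, or has exactly six nonzero coefficients, all `±1`.

In the second case the autocorrelations of `f` at lags strictly between `0` and `n` are even, so
every such distance occurs an even number of times among the six exponents of `F`. Up to reflection
this forces the exponents to be proportional to `0, 1, 2, 3, 6, 7`, and comparing signs leaves only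
the eight excluded families.

In the first case `p` or `q` is associated to its own mirror. An irreducible factor of a
self-reciprocal divisor of `f` divides both `f` and `f.mirror`, hence `X ^ m ± X ^ (n - m)`, or
`X ^ m ± 1` when `n = 2 * m`, so it is cyclotomic. Thus of any two irreducible factors of `f` one is
cyclotomic.
-/

namespace FilasetaTrinomial

/-! ### Cyclotomic factors -/

/-- Being one of the polynomials `Φ_i` with `i > 0`; this excludes the convention `Φ_0 = 1`. -/
def IsCyclotomic (p : ℤ[X]) : Prop :=
  ∃ i, 0 < i ∧ cyclotomic i ℤ = p

theorem C_sq_eq_one {ε : ℤ} (hε : IsUnit ε) : (C ε : ℤ[X]) ^ 2 = 1 := by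
  rw [← C_pow, Int.isUnit_sq hε, C_1]

section

variable {p : ℤ[X]} (hp : p.Monic) (hirr : Irreducible p)
include hp hirr

theorem isCyclotomic_of_dvd_X_pow_sub_one {N : ℕ} (hN : 0 < N) (h : p ∣ X ^ N - 1) :
    IsCyclotomic p := by
  rw [← prod_cyclotomic_eq_X_pow_sub_one hN, hirr.prime.dvd_finsetProd_iff] at h
  obtain ⟨i, hi, hpi⟩ := h
  have hi0 : 0 < i := Nat.pos_of_mem_divisors hi
  exact ⟨i, hi0, eq_of_monic_of_associated (cyclotomic.monic i ℤ) hp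
    (hirr.associated_of_dvd (cyclotomic.irreducible hi0) hpi).symm⟩

theorem isCyclotomic_of_dvd_X_pow_sub_C {r : ℕ} (hr : 0 < r) {ε : ℤ} (hε : IsUnit ε)
    (h : p ∣ X ^ r - C ε) : IsCyclotomic p := by
  refine isCyclotomic_of_dvd_X_pow_sub_one hp hirr (N := r * 2) (by lia) (h.trans ?_)
  exact ⟨X ^ r + C ε, by rw [pow_mul]; linear_combination C_sq_eq_one hε⟩

theorem isCyclotomic_of_dvd_X_pow_sub_C_mul_X_pow (hpX : ¬ p ∣ X) {i j : ℕ} (hij : i ≠ j) {ε : ℤ}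
    (hε : IsUnit ε) (h : p ∣ X ^ i - C ε * X ^ j) : IsCyclotomic p := by
  wlog hlt : j < i generalizing i j
  · refine this hij.symm ?_ (by lia)
    rw [show (X ^ j - C ε * X ^ i : ℤ[X]) = -C ε * (X ^ i - C ε * X ^ j) by
      linear_combination -X ^ j * C_sq_eq_one hε]
    exact h.mul_left _
  obtain ⟨r, rfl⟩ := Nat.exists_eq_add_of_lt hlt
  rw [show (X ^ (j + r + 1) - C ε * X ^ j : ℤ[X]) = X ^ j * (X ^ (r + 1) - C ε) by ring] at h
  exact isCyclotomic_of_dvd_X_pow_sub_C hp hirr r.succ_pos hε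
    ((hirr.prime.dvd_or_dvd h).resolve_left fun h' => hpX (hirr.prime.dvd_of_dvd_pow h'))

end

theorem exists_multiset_monic_irreducible_prod_eq {f : ℤ[X]} (hf : f.Monic) :
    ∃ T : Multiset ℤ[X], (∀ p ∈ T, p.Monic ∧ Irreducible p) ∧ T.prod = f := by
  refine ⟨UniqueFactorizationMonoid.normalizedFactors f, fun p hp => ⟨?_, ?_⟩, ?_⟩
  · have hunit : IsUnit p.leadingCoeff := isUnit_of_dvd_one <| hf.leadingCoeff ▸
      leadingCoeff_dvd_leadingCoeff (UniqueFactorizationMonoid.dvd_of_mem_normalizedFactors hp)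
    rw [Monic, ← UniqueFactorizationMonoid.normalize_normalized_factor p hp,
      leadingCoeff_normalize, normalize_eq_one.mpr hunit]
  · exact UniqueFactorizationMonoid.irreducible_of_normalized_factor p hp
  · rw [UniqueFactorizationMonoid.prod_normalizedFactors_eq hf.ne_zero, hf.normalize_eq_self]

theorem exists_map_cyclotomic_eq {T : Multiset ℤ[X]} (hT : ∀ p ∈ T, IsCyclotomic p) :
    ∃ S : Multiset ℕ, (∀ i ∈ S, 0 < i) ∧ S.map (fun i => cyclotomic i ℤ) = T := by
  choose! index hpos hindex using hT
  refine ⟨T.map index, by simpa using hpos, ?_⟩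
  exact (Multiset.map_map ..).trans ((Multiset.map_congr rfl hindex).trans (Multiset.map_id' T))

theorem exists_cyclotomic_prod_mul_irreducible {f : ℤ[X]} (hf : f.Monic)
    (h : ∀ p q, p.Monic → q.Monic → Irreducible p → Irreducible q → p * q ∣ f →
      IsCyclotomic p ∨ IsCyclotomic q) :
    ∃ (S : Multiset ℕ) (g : ℤ[X]), (∀ i ∈ S, 0 < i) ∧
      f = (S.map (fun i => cyclotomic i ℤ)).prod * g ∧ (g = 1 ∨ Irreducible g) := by
  classical
  obtain ⟨T, hT, rfl⟩ := exists_multiset_monic_irreducible_prod_eq hf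
  obtain ⟨S, hS, hST⟩ := exists_map_cyclotomic_eq
    (T := T.filter IsCyclotomic) fun p hp => (Multiset.mem_filter.mp hp).2
  set U := T.filter (¬ IsCyclotomic ·)
  have hUT : U ≤ T := Multiset.filter_le _ T
  have hUmem : ∀ p ∈ U, p.Monic ∧ Irreducible p ∧ ¬ IsCyclotomic p := fun p hp =>
    have hp' := Multiset.mem_filter.mp hp
    ⟨(hT p hp'.1).1, (hT p hp'.1).2, hp'.2⟩
  refine ⟨S, U.prod, hS, by rw [hST, ← Multiset.prod_add, Multiset.filter_add_not], ?_⟩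
  obtain hU0 | ⟨p, hp⟩ := U.empty_or_exists_mem
  · exact .inl (by rw [hU0, Multiset.prod_zero])
  obtain ⟨V, hV⟩ := Multiset.exists_cons_of_mem hp
  obtain rfl | ⟨q, hq⟩ := V.empty_or_exists_mem
  · exact .inr (by simpa [hV] using (hUmem p hp).2.1)
  obtain ⟨W, rfl⟩ := Multiset.exists_cons_of_mem hq
  have hqU : q ∈ U := by simp [hV]
  have hpq : p * q ∣ T.prod := by
    refine (Dvd.intro W.prod ?_).trans (Multiset.prod_dvd_prod_of_le hUT)
    rw [hV, Multiset.prod_cons, Multiset.prod_cons, mul_assoc]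
  obtain ⟨⟨hpm, hpi, hpc⟩, hqm, hqi, hqc⟩ := And.intro (hUmem p hp) (hUmem q hqU)
  exact absurd (h p q hpm hqm hpi hqi hpq) (not_or.mpr ⟨hpc, hqc⟩)

/-! ### Common factors of a trinomial and its mirror -/

section

variable {R : Type*} [CommRing R] {p : R[X]} (hp : p.Monic) (hp' : ¬ IsUnit p)
include hp hp'

theorem not_dvd_C {z : R} (hz : z ≠ 0) : ¬ p ∣ C z :=
  hp.not_dvd_of_natDegree_lt (C_ne_zero.mpr hz) <| by
    simpa using hp.natDegree_pos_of_not_isUnit hp'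

theorem not_dvd_X_of_dvd {f : R[X]} (h : p ∣ f) (hf : f.coeff 0 ≠ 0) : ¬ p ∣ X := fun hX =>
  not_dvd_C hp hp' hf ((dvd_sub_right h).mp (hX.trans X_dvd_sub_C))

end

theorem isCyclotomic_of_dvd_trinomial_of_dvd_mirror {p : ℤ[X]} (hp : p.Monic) (hirr : Irreducible p)
    {n m : ℕ} (hm : 0 < m) (hmn : m < n) {ε₁ ε₂ : ℤ} (hε₁ : IsUnit ε₁) (hε₂ : IsUnit ε₂)
    (h : p ∣ trinomial 0 m n ε₂ (2 * ε₁) 1) (h' : p ∣ (trinomial 0 m n ε₂ (2 * ε₁) 1).mirror) :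
    IsCyclotomic p := by
  have hpX : ¬ p ∣ X := not_dvd_X_of_dvd hp hirr.not_isUnit h <| by
    rw [trinomial_trailing_coeff' hm hmn]
    exact hε₂.ne_zero
  have hdiff : p ∣ C (2 * ε₁) * (X ^ m - C ε₂ * X ^ (n - m)) := by
    rw [trinomial_mirror hm hmn hε₂.ne_zero one_ne_zero] at h'
    convert dvd_sub h (h'.mul_left (C ε₂)) using 1
    simp only [trinomial_def, add_zero, C_1]
    linear_combination X ^ n * C_sq_eq_one hε₂
  replace hdiff := (hirr.prime.dvd_or_dvd hdiff).resolve_left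
    (not_dvd_C hp hirr.not_isUnit (mul_ne_zero two_ne_zero hε₁.ne_zero))
  obtain hne | heq := ne_or_eq m (n - m)
  · exact isCyclotomic_of_dvd_X_pow_sub_C_mul_X_pow hp hirr hpX hne hε₂ hdiff
  rw [← heq] at hdiff
  obtain rfl : n = m * 2 := by lia
  obtain rfl | rfl := Int.isUnit_iff.mp hε₂
  · have hsq : trinomial 0 m (m * 2) 1 (2 * ε₁) 1 = (X ^ m - C (-ε₁)) ^ 2 := by
      simp only [trinomial_def, C_mul, C_neg, C_1, C_ofNat, pow_mul]
      linear_combination -C_sq_eq_one hε₁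
    exact isCyclotomic_of_dvd_X_pow_sub_C hp hirr hm hε₁.neg
      (hirr.prime.dvd_of_dvd_pow (hsq ▸ h))
  · have htwo : p ∣ C 2 * X ^ m := by
      convert hdiff using 1
      simp only [C_neg, C_1, C_ofNat]
      ring
    obtain h2 | hXm := hirr.prime.dvd_or_dvd htwo
    · exact absurd h2 (not_dvd_C hp hirr.not_isUnit two_ne_zero)
    · exact absurd (hirr.prime.dvd_of_dvd_pow hXm) hpX

/-! ### Autocorrelation of coefficient sequences -/

section

variable {R : Type*} [Semiring R]

/-- The autocorrelation of the coefficient sequence of `p` at lag `t`. -/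
def autocorr (p : R[X]) (t : ℕ) : R :=
  p.sum fun i a => p.coeff (i + t) * a

theorem coeff_mul_mirror_add (p : R[X]) (t : ℕ) :
    (p * p.mirror).coeff (p.natDegree + p.natTrailingDegree + t) = autocorr p t := by
  set N := p.natDegree + p.natTrailingDegree with hN
  have hlt : ∀ i ∈ Finset.range t, p.coeff i * p.mirror.coeff (N + t - i) = 0 := fun i hi => by
    have : p.mirror.natDegree < N + t - i := by
      rw [mirror_natDegree]
      grind
    rw [coeff_eq_zero_of_natDegree_lt this, mul_zero]
  have hge : ∀ i ∈ Finset.range (N + 1),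
      p.coeff (t + i) * p.mirror.coeff (N + t - (t + i)) = p.coeff (i + t) * p.coeff i := by
    intro i hi
    have hi' := Finset.mem_range_succ_iff.mp hi
    rw [coeff_mirror, ← hN, show N + t - (t + i) = N - i by lia, ← revAt_le hi', revAt_invol,
      add_comm t]
  rw [coeff_mul, Finset.Nat.sum_antidiagonal_eq_sum_range_succ_mk,
    show (N + t).succ = t + (N + 1) by lia, Finset.sum_range_add, Finset.sum_eq_zero hlt, zero_add,
    Finset.sum_congr rfl hge]
  exact (p.sum_eq_of_subset _ (fun _ => mul_zero _) fun i hi => Finset.mem_range_succ_iff.mpr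
    ((le_natDegree_of_mem_supp i hi).trans (Nat.le_add_right ..))).symm

section

variable [NoZeroDivisors R] {p q : R[X]}

theorem natDegree_eq_of_mul_mirror_eq (h : p * p.mirror = q * q.mirror) :
    p.natDegree = q.natDegree := by
  have := congr(natDegree $h)
  rw [natDegree_mul_mirror, natDegree_mul_mirror] at this
  lia

theorem natTrailingDegree_eq_of_mul_mirror_eq (h : p * p.mirror = q * q.mirror) :
    p.natTrailingDegree = q.natTrailingDegree := by
  have := congr(natTrailingDegree $h)
  rw [natTrailingDegree_mul_mirror, natTrailingDegree_mul_mirror] at this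
  lia

theorem autocorr_eq_of_mul_mirror_eq (h : p * p.mirror = q * q.mirror) (t : ℕ) :
    autocorr p t = autocorr q t := by
  rw [← coeff_mul_mirror_add, ← coeff_mul_mirror_add, h, natDegree_eq_of_mul_mirror_eq h,
    natTrailingDegree_eq_of_mul_mirror_eq h]

theorem leadingCoeff_mul_trailingCoeff_eq_of_mul_mirror_eq (h : p * p.mirror = q * q.mirror) :
    p.leadingCoeff * p.trailingCoeff = q.leadingCoeff * q.trailingCoeff := by
  simpa using congr(leadingCoeff $h)

end

theorem autocorr_zero (p : R[X]) : autocorr p 0 = p.sum fun _ a => a ^ 2 := by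
  simp [autocorr, sum_def, sq]

theorem trinomial_sum_eq {M : Type*} [AddCommMonoid M] {k m n : ℕ} (hkm : k < m) (hmn : m < n)
    {u v w : R} {φ : ℕ → R → M} (hφ : ∀ i, φ i 0 = 0) :
    (trinomial k m n u v w).sum φ = φ k u + φ m v + φ n w := by
  rw [(trinomial k m n u v w).sum_eq_of_subset φ hφ (support_trinomial_subset k m n u v w),
    Finset.sum_insert (by grind), Finset.sum_insert (by grind), Finset.sum_singleton,
    trinomial_trailing_coeff' hkm hmn, trinomial_middle_coeff hkm hmn,
    trinomial_leading_coeff' hkm hmn, add_assoc]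

theorem autocorr_trinomial {m n : ℕ} (hm : 0 < m) (hmn : m < n) {u v w : R} {t : ℕ} (ht : 0 < t) :
    autocorr (trinomial 0 m n u v w) t =
      (if t = m then v * u else 0) + (if t = n then w * u else 0) +
        (if m + t = n then w * v else 0) := by
  have hnt : n + t ≠ m := by lia
  rw [autocorr, trinomial_sum_eq hm hmn fun _ => mul_zero _]
  simp [trinomial_def, coeff_X_pow, coeff_C, ht.ne', hnt, add_mul]

theorem autocorr_trinomial_zero {m n : ℕ} (hm : 0 < m) (hmn : m < n) {u v w : R} :
    autocorr (trinomial 0 m n u v w) 0 = u ^ 2 + v ^ 2 + w ^ 2 := by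
  rw [autocorr_zero, trinomial_sum_eq hm hmn fun _ => zero_pow two_ne_zero]

end

/-! ### Trinomials with equal autocorrelation -/

theorem trinomial_mul_mirror {R : Type*} [CommRing R] [Nontrivial R] {n k : ℕ} (hk : 0 < k)
    (hkn : k < n) {ε : R} (hε : ε ^ 2 = 1) (v : R) :
    trinomial 0 k n ε v 1 * (trinomial 0 k n ε v 1).mirror =
      (X ^ n + C ε) * (C ε * X ^ n + 1) + C (v ^ 2) * X ^ n +
        (X ^ n + C ε) * (C (v * ε) * X ^ k + C v * X ^ (n - k)) := by
  have hCε : (C ε : R[X]) ^ 2 = 1 := by rw [← C_pow, hε, C_1]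
  have hε0 : ε ≠ 0 := fun h => by simp [h] at hε
  obtain ⟨r, rfl⟩ := Nat.exists_eq_add_of_lt hkn
  rw [trinomial_mirror hk hkn hε0 one_ne_zero]
  simp only [trinomial_def, show k + r + 1 - k = r + 1 by lia, C_mul, C_pow, C_1]
  linear_combination -C v * X ^ k * hCε

theorem trinomial_associated_of_mul_mirror_eq {n k m : ℕ} (hk : 0 < k) (hkn : k < n) (hm : 0 < m)
    (hmn : m < n) {ε u v : ℤ} (hε : IsUnit ε) (hv : v ≠ 0) (huv : u ^ 2 = v ^ 2)
    (h : trinomial 0 k n ε u 1 * (trinomial 0 k n ε u 1).mirror =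
      trinomial 0 m n ε v 1 * (trinomial 0 m n ε v 1).mirror) :
    Associated (trinomial 0 k n ε u 1) (trinomial 0 m n ε v 1) ∨
      Associated (trinomial 0 k n ε u 1) (trinomial 0 m n ε v 1).mirror := by
  have hcancel : (C (u * ε) * X ^ k + C u * X ^ (n - k) : ℤ[X]) =
      C (v * ε) * X ^ m + C v * X ^ (n - m) := by
    rw [trinomial_mul_mirror hk hkn (Int.isUnit_sq hε), trinomial_mul_mirror hm hmn
      (Int.isUnit_sq hε), huv] at h
    exact mul_left_cancel₀ (monic_X_pow_add_C ε (by lia)).ne_zero (add_left_cancel h)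
  rw [trinomial_mirror hm hmn hε.ne_zero one_ne_zero, add_zero]
  obtain rfl | rfl := sq_eq_sq_iff_eq_or_eq_neg.mp huv
  · rw [binomial_eq_binomial (mul_ne_zero hv hε.ne_zero) hv] at hcancel
    obtain ⟨rfl, -⟩ | ⟨huε, rfl, -⟩ | ⟨-, hkk, hmm⟩ := hcancel
    · exact .inl (.refl _)
    · obtain rfl : ε = 1 := mul_left_cancel₀ hv (by rw [huε, mul_one])
      exact .inr (.refl _)
    · obtain rfl : k = m := by lia
      exact .inl (.refl _)
  · obtain rfl | rfl := Int.isUnit_iff.mp hε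
    · have := congr(eval 1 $hcancel)
      simp only [mul_one, eq_intCast, Int.cast_neg, neg_mul, eval_add, eval_neg, eval_mul,
        eval_intCast, Int.cast_eq, eval_pow, eval_X, one_pow] at this
      lia
    have hcancel' : (C v * X ^ k + C (-v) * X ^ (n - k) : ℤ[X]) =
      C v * X ^ (n - m) + C (-v) * X ^ m := by simpa [add_comm] using hcancel
    have : k = n - m := by
      rw [binomial_eq_binomial hv (by lia)] at hcancel'
      lia
    exact .inr ⟨-1, by simp [trinomial_def, this]; ring⟩

/-! ### Shape of the support -/

theorem eq_singleton_or_card_eq_four_of_sum_sq_eq_four {ι : Type*} {S : Finset ι} {c : ι → ℤ}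
    (hc : ∀ i ∈ S, c i ≠ 0) (h : ∑ i ∈ S, c i ^ 2 = 4) :
    (∃ k, S = {k} ∧ c k ^ 2 = 4) ∨ (S.card = 4 ∧ ∀ i ∈ S, IsUnit (c i)) := by
  classical
  by_cases hunit : ∀ i ∈ S, IsUnit (c i)
  · rw [Finset.sum_congr rfl fun i hi => Int.isUnit_sq (hunit i hi)] at h
    exact .inr ⟨by simpa [← @Nat.cast_inj ℤ] using h, hunit⟩
  push Not at hunit
  obtain ⟨k, hk, hku⟩ := hunit
  have hk4 : 4 ≤ c k ^ 2 := by
    have h2 : (2 : ℤ) ≤ |c k| := by grind [Int.isUnit_iff]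
    nlinarith [sq_abs (c k)]
  rw [← Finset.add_sum_erase S _ hk] at h
  have hnonneg : ∀ i ∈ S.erase k, 0 ≤ c i ^ 2 := fun _ _ => sq_nonneg _
  have hsum : ∑ i ∈ S.erase k, c i ^ 2 = 0 :=
    le_antisymm (by lia) (Finset.sum_nonneg hnonneg)
  refine .inl ⟨k, Finset.eq_singleton_iff_unique_mem.mpr ⟨hk, fun i hi => ?_⟩, by lia⟩
  by_contra hik
  exact hc i hi <| pow_eq_zero_iff two_ne_zero |>.mp <|
    (Finset.sum_eq_zero_iff_of_nonneg hnonneg).mp hsum i (Finset.mem_erase.mpr ⟨hik, hi⟩)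

theorem exists_lt_lt_lt_of_card_eq_four {α : Type*} [LinearOrder α] {S : Finset α}
    (h : S.card = 4) : ∃ a b c d, a < b ∧ b < c ∧ c < d ∧ S = {a, b, c, d} := by
  refine ⟨S.orderEmbOfFin h 0, S.orderEmbOfFin h 1, S.orderEmbOfFin h 2, S.orderEmbOfFin h 3,
    by simp, by simp, by simp, ?_⟩
  have huniv : (Finset.univ : Finset (Fin 4)) = {0, 1, 2, 3} := rfl
  refine (Finset.image_orderEmbOfFin_univ S h).symm.trans ?_
  rw [huniv, Finset.image_insert, Finset.image_insert, Finset.image_insert, Finset.image_singleton]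

theorem support_cases_of_sum_sq_eq_six {F : ℤ[X]} {n : ℕ} (hn : 0 < n) (hdeg : F.natDegree = n)
    (h0 : IsUnit (F.coeff 0)) (hFn : IsUnit (F.coeff n)) (h : F.sum (fun _ a => a ^ 2) = 6) :
    (∃ k, 0 < k ∧ k < n ∧ F.support = {0, k, n} ∧ F.coeff k ^ 2 = 4) ∨
      (∃ a b c d, 0 < a ∧ a < b ∧ b < c ∧ c < d ∧ d < n ∧ F.support = {0, a, b, c, d, n} ∧
        ∀ i ∈ F.support, IsUnit (F.coeff i)) := by
  set S := (F.support.erase n).erase 0 with hS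
  have hn_mem : n ∈ F.support := mem_support_iff.mpr hFn.ne_zero
  have h0_mem : 0 ∈ F.support.erase n :=
    Finset.mem_erase.mpr ⟨hn.ne, mem_support_iff.mpr h0.ne_zero⟩
  have hsupp : F.support = insert n (insert 0 S) := by
    rw [hS, Finset.insert_erase h0_mem, Finset.insert_erase hn_mem]
  have hSsub : S ⊆ F.support := (Finset.erase_subset ..).trans (Finset.erase_subset ..)
  have hSlt : ∀ i ∈ S, 0 < i ∧ i < n := fun i hi => by
    have := le_natDegree_of_mem_supp i (hSsub hi)
    grind
  have hsum : ∑ i ∈ S, F.coeff i ^ 2 = 4 := by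
    rw [sum_def, ← Finset.add_sum_erase _ _ hn_mem, ← Finset.add_sum_erase _ _ h0_mem,
      Int.isUnit_sq h0, Int.isUnit_sq hFn] at h
    lia
  obtain ⟨k, hSk, hk⟩ | ⟨hcard, hunit⟩ :=
    eq_singleton_or_card_eq_four_of_sum_sq_eq_four (fun i hi => mem_support_iff.mp (hSsub hi)) hsum
  · have hk' := hSlt k (by simp [hSk])
    exact .inl ⟨k, hk'.1, hk'.2, by grind, hk⟩
  · obtain ⟨a, b, c, d, hab, hbc, hcd, hSabcd⟩ := exists_lt_lt_lt_of_card_eq_four hcard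
    have ha := hSlt a (by simp [hSabcd])
    have hd := hSlt d (by simp [hSabcd])
    exact .inr ⟨a, b, c, d, ha.1, hab, hbc, hcd, hd.2, by grind, by grind⟩

/-! ### Parity of the number of pairs at a given distance -/

/-- The set of lower endpoints of the pairs of elements of `S` at distance `t`. -/
def lagSet (S : Finset ℕ) (t : ℕ) : Finset ℕ :=
  {i ∈ S | i + t ∈ S}

theorem mem_lagSet {S : Finset ℕ} {t i : ℕ} : i ∈ lagSet S t ↔ i ∈ S ∧ i + t ∈ S :=
  Finset.mem_filter

theorem even_card_lagSet_of_even_autocorr {p : ℤ[X]} (hp : ∀ i ∈ p.support, IsUnit (p.coeff i))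
    {t : ℕ} (h : Even (autocorr p t)) : Even (lagSet p.support t).card := by
  have hterm : ∀ i ∈ lagSet p.support t, Even (p.coeff (i + t) * p.coeff i - 1) := fun i hi => by
    obtain ⟨hi, hit⟩ := mem_lagSet.mp hi
    obtain h' | h' := Int.isUnit_iff.mp ((hp _ hit).mul (hp i hi)) <;> rw [h'] <;> decide
  have hsum : autocorr p t = ∑ i ∈ lagSet p.support t, p.coeff (i + t) * p.coeff i :=
    (Finset.sum_filter_of_ne fun i _ hne => mem_support_iff.mpr (left_ne_zero_of_mul hne)).symm
  have hdiff := Finset.even_sum _ hterm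
  rw [Finset.sum_sub_distrib, ← hsum, Finset.sum_const, nsmul_one, Int.even_sub] at hdiff
  exact Int.even_coe_nat _ |>.mp (hdiff.mp h)

section

variable {a b c d n : ℕ} (ha : 0 < a) (hab : a < b) (hbc : b < c) (hcd : c < d) (hdn : d < n)
  (heven : ∀ t, 0 < t → t < n → Even (lagSet {0, a, b, c, d, n} t).card)
include ha hab hbc hcd hdn heven

theorem add_eq_of_even_card_lagSet : a + d = n := by
  obtain hlt | heq | hgt := lt_trichotomy (a + d) n
  · have hset : lagSet {0, a, b, c, d, n} (n - a) = {a} := by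
      ext i
      simp only [mem_lagSet, Finset.mem_insert, Finset.mem_singleton]
      lia
    simpa [hset] using heven (n - a) (by lia) (by lia)
  · exact heq
  · have hset : lagSet {0, a, b, c, d, n} d = {0} := by
      ext i
      simp only [mem_lagSet, Finset.mem_insert, Finset.mem_singleton]
      lia
    simpa [hset] using heven d (by lia) (by lia)

theorem add_ne_of_even_card_lagSet : b + c ≠ n := by
  intro hn
  have had := add_eq_of_even_card_lagSet ha hab hbc hcd hdn heven
  have hcard : Odd (lagSet {0, a, b, c, d, n} (n - 2 * a)).card := by
    by_cases h : 2 * a = b ∨ 2 * a = c ∨ 2 * a = d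
    · have hset : lagSet {0, a, b, c, d, n} (n - 2 * a) = {0, a, 2 * a} := by
        ext i
        simp only [mem_lagSet, Finset.mem_insert, Finset.mem_singleton]
        lia
      rw [hset, Finset.card_eq_three.mpr ⟨0, a, 2 * a, by lia, by lia, by lia, rfl⟩]
      decide
    · have hset : lagSet {0, a, b, c, d, n} (n - 2 * a) = {a} := by
        ext i
        simp only [mem_lagSet, Finset.mem_insert, Finset.mem_singleton]
        lia
      simp [hset]
  exact Nat.not_even_iff_odd.mpr hcard (heven (n - 2 * a) (by lia) (by lia))

theorem eq_mul_of_even_card_lagSet (hn : b + c < n) :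
    b = 2 * a ∧ c = 3 * a ∧ d = 6 * a ∧ n = 7 * a := by
  have had := add_eq_of_even_card_lagSet ha hab hbc hcd hdn heven
  obtain rfl : b = 2 * a := by
    by_contra hb
    have hset : lagSet {0, a, b, c, d, n} (n - b) = {b} := by
      ext i
      simp only [mem_lagSet, Finset.mem_insert, Finset.mem_singleton]
      lia
    simpa [hset] using heven (n - b) (by lia) (by lia)
  obtain rfl : c = 3 * a := by
    by_contra hc
    have hset : lagSet {0, a, 2 * a, c, d, n} a = {0, a, d} := by
      ext i
      simp only [mem_lagSet, Finset.mem_insert, Finset.mem_singleton]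
      lia
    have hcard := heven a (by lia) (by lia)
    rw [hset, Finset.card_eq_three.mpr ⟨0, a, d, by lia, by lia, by lia, rfl⟩] at hcard
    exact absurd hcard (by decide)
  suffices n = 7 * a by lia
  by_contra hn7
  have hcard := heven (3 * a) (by lia) (by lia)
  by_cases hn6 : n = 6 * a
  · have hset : lagSet {0, a, 2 * a, 3 * a, d, n} (3 * a) = {0, 2 * a, 3 * a} := by
      ext i
      simp only [mem_lagSet, Finset.mem_insert, Finset.mem_singleton]
      lia
    rw [hset, Finset.card_eq_three.mpr ⟨0, 2 * a, 3 * a, by lia, by lia, by lia, rfl⟩] at hcard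
    exact absurd hcard (by decide)
  · have hset : lagSet {0, a, 2 * a, 3 * a, d, n} (3 * a) = {0} := by
      ext i
      simp only [mem_lagSet, Finset.mem_insert, Finset.mem_singleton]
      lia
    simp [hset] at hcard

end

/-! ### Six-term polynomials -/

/-- The values of `(7 * m / n, ε₁, ε₂)` in the eight families excluded from the theorem. -/
def exceptionalTriples : Finset (ℕ × ℤ × ℤ) :=
  {(2, -1, 1), (5, -1, 1), (2, 1, -1), (5, -1, -1), (3, 1, 1), (4, 1, 1), (3, 1, -1), (4, -1, -1)}

/-- Membership of `X^n + 2ε₁X^m + ε₂` in one of the excluded families. -/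
def IsExceptional (n m : ℕ) (ε₁ ε₂ : ℤ) : Prop :=
  ∃ k l, 0 < k ∧ n = 7 * k ∧ m = l * k ∧ (l, ε₁, ε₂) ∈ exceptionalTriples

theorem autocorr_mul_of_support_eq_image {R : Type*} [Semiring R] {p : R[X]} {a : ℕ} (ha : 0 < a)
    {J : Finset ℕ} (hp : p.support = J.image (· * a)) (j : ℕ) :
    autocorr p (j * a) = ∑ i ∈ J, p.coeff ((i + j) * a) * p.coeff (i * a) := by
  rw [autocorr, sum_def, hp, Finset.sum_image (mul_left_injective₀ ha.ne').injOn]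
  simp only [add_mul]

theorem autocorr_mul_of_support_eq {R : Type*} [Semiring R] {p : R[X]} {a : ℕ} (ha : 0 < a)
    (hp : p.support = {0, a, 2 * a, 3 * a, 6 * a, 7 * a}) {s : ℕ → R}
    (hs : ∀ j, p.coeff (j * a) = s j) :
    autocorr p (1 * a) = s 1 * s 0 + s 2 * s 1 + s 3 * s 2 + s 7 * s 6 ∧
    autocorr p (2 * a) = s 2 * s 0 + s 3 * s 1 ∧
    autocorr p (3 * a) = s 3 * s 0 + s 6 * s 3 ∧
    autocorr p (4 * a) = s 6 * s 2 + s 7 * s 3 ∧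
    autocorr p (5 * a) = s 6 * s 1 + s 7 * s 2 ∧
    autocorr p (6 * a) = s 6 * s 0 + s 7 * s 1 ∧
    autocorr p (7 * a) = s 7 * s 0 := by
  have himage : p.support = ({0, 1, 2, 3, 6, 7} : Finset ℕ).image (· * a) := by simp [hp]
  have hzero : ∀ j, j ∉ ({0, 1, 2, 3, 6, 7} : Finset ℕ) → s j = 0 := fun j hj => by
    rwa [← hs, ← notMem_support_iff, himage, (mul_left_injective₀ ha.ne').mem_finset_image]
  have hcorr := autocorr_mul_of_support_eq_image ha himage
  simp only [hs] at hcorr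
  refine ⟨?_, ?_, ?_, ?_, ?_, ?_, ?_⟩ <;> rw [hcorr] <;> simp [hzero, add_assoc]

theorem exists_signs_autocorr_mul_eq {F : ℤ[X]} {a : ℕ} (ha : 0 < a)
    (hsupp : F.support = {0, a, 2 * a, 3 * a, 6 * a, 7 * a})
    (hunit : ∀ i ∈ F.support, IsUnit (F.coeff i)) : ∃ s₀ s₁ s₂ s₃ s₆ s₇ : ℤˣ,
    autocorr F (1 * a) = s₁ * s₀ + s₂ * s₁ + s₃ * s₂ + s₇ * s₆ ∧
    autocorr F (2 * a) = s₂ * s₀ + s₃ * s₁ ∧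
    autocorr F (3 * a) = s₃ * s₀ + s₆ * s₃ ∧
    autocorr F (4 * a) = s₆ * s₂ + s₇ * s₃ ∧
    autocorr F (5 * a) = s₆ * s₁ + s₇ * s₂ ∧
    autocorr F (6 * a) = s₆ * s₀ + s₇ * s₁ ∧
    autocorr F (7 * a) = s₇ * s₀ := by
  obtain ⟨s₀, hs₀⟩ := hunit (0 * a) (by simp [hsupp])
  obtain ⟨s₁, hs₁⟩ := hunit (1 * a) (by simp [hsupp])
  obtain ⟨s₂, hs₂⟩ := hunit (2 * a) (by simp [hsupp])
  obtain ⟨s₃, hs₃⟩ := hunit (3 * a) (by simp [hsupp])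
  obtain ⟨s₆, hs₆⟩ := hunit (6 * a) (by simp [hsupp])
  obtain ⟨s₇, hs₇⟩ := hunit (7 * a) (by simp [hsupp])
  refine ⟨s₀, s₁, s₂, s₃, s₆, s₇, ?_⟩
  rw [hs₀, hs₁, hs₂, hs₃, hs₆, hs₇]
  exact autocorr_mul_of_support_eq ha hsupp fun j => rfl

-- The quantifiers alternate with the equations to prune the search over all signs in `decide`.
theorem mem_exceptionalTriples_of_signs (l : Fin 8) (ε₁ ε₂ s₀ s₇ : ℤˣ) :
    let r : ℕ → ℤ := fun j => (if j = l then (2 * ε₁ * ε₂ : ℤ) else 0) +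
      (if j = 7 then (ε₂ : ℤ) else 0) + (if l + j = 7 then (2 * ε₁ : ℤ) else 0)
    (s₇ * s₀ : ℤ) = r 7 →
    ∀ s₃ s₆ : ℤˣ, (s₃ * s₀ + s₆ * s₃ : ℤ) = r 3 →
    ∀ s₁ : ℤˣ, (s₆ * s₀ + s₇ * s₁ : ℤ) = r 6 →
    ∀ s₂ : ℤˣ, (s₂ * s₀ + s₃ * s₁ : ℤ) = r 2 → (s₆ * s₂ + s₇ * s₃ : ℤ) = r 4 →
      (s₆ * s₁ + s₇ * s₂ : ℤ) = r 5 → (s₁ * s₀ + s₂ * s₁ + s₃ * s₂ + s₇ * s₆ : ℤ) = r 1 →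
    ((l : ℕ), (ε₁ : ℤ), (ε₂ : ℤ)) ∈ exceptionalTriples := by
  revert l ε₁ ε₂ s₀ s₇
  decide +kernel

theorem lag_six_ne_zero_of_lag_two_four_eq_zero (s₀ s₁ s₂ s₃ s₆ s₇ : ℤˣ)
    (h₂ : (s₂ * s₀ + s₃ * s₁ : ℤ) = 0) (h₄ : (s₆ * s₂ + s₇ * s₃ : ℤ) = 0) :
    (s₆ * s₀ + s₇ * s₁ : ℤ) ≠ 0 := by
  revert s₀ s₁ s₂ s₃ s₆ s₇
  decide +kernel

theorem isExceptional_of_autocorr_eq {F : ℤ[X]} {a m : ℕ} (ha : 0 < a) (hm : 0 < m)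
    (hmn : m < 7 * a) {ε₁ ε₂ : ℤ} (hε₁ : IsUnit ε₁) (hε₂ : IsUnit ε₂)
    (hsupp : F.support = {0, a, 2 * a, 3 * a, 6 * a, 7 * a})
    (hunit : ∀ i ∈ F.support, IsUnit (F.coeff i))
    (hcorr : ∀ t, autocorr F t = autocorr (trinomial 0 m (7 * a) ε₂ (2 * ε₁) 1) t) :
    IsExceptional (7 * a) m ε₁ ε₂ := by
  have hr : ∀ t, 0 < t → autocorr F t = (if t = m then 2 * ε₁ * ε₂ else 0) +
      (if t = 7 * a then ε₂ else 0) + (if m + t = 7 * a then 2 * ε₁ else 0) :=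
    fun t ht => by rw [hcorr, autocorr_trinomial hm hmn ht, one_mul, one_mul]
  obtain ⟨s₀, s₁, s₂, s₃, s₆, s₇, h₁, h₂, h₃, h₄, h₅, h₆, h₇⟩ :=
    exists_signs_autocorr_mul_eq ha hsupp hunit
  lift ε₁ to ℤˣ using hε₁
  lift ε₂ to ℤˣ using hε₂
  rw [hr _ (by lia)] at h₁ h₂ h₃ h₄ h₅ h₆ h₇
  obtain ⟨l, rfl⟩ | ham := em (a ∣ m)
  · have hl : l < 8 := by nlinarith
    simp only [mul_comm a l, ← add_mul, Nat.mul_left_inj ha.ne'] at h₁ h₂ h₃ h₄ h₅ h₆ h₇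
    exact ⟨a, l, ha, rfl, mul_comm a l, mem_exceptionalTriples_of_signs ⟨l, hl⟩ ε₁ ε₂ s₀ s₇ h₇.symm
      s₃ s₆ h₃.symm s₁ h₆.symm s₂ h₂.symm h₄.symm h₅.symm h₁.symm⟩
  · have hne : ∀ j, j * a ≠ m ∧ m + j * a ≠ 7 * a := fun j =>
      ⟨fun h => ham ⟨j, by lia⟩, fun h => ham
        ((Nat.dvd_add_left ⟨j, by lia⟩).mp (⟨7, by lia⟩ : a ∣ m + j * a))⟩
    simp only [hne, Nat.mul_left_inj ha.ne', if_false, add_zero, Nat.reduceEqDiff] at h₂ h₄ h₆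
    exact (lag_six_ne_zero_of_lag_two_four_eq_zero _ _ _ _ _ _ h₂.symm h₄.symm h₆.symm).elim

/-! ### Polynomials with the same product with the mirror as the trinomial -/

theorem mem_support_mirror {R : Type*} [Semiring R] {p : R[X]} {i : ℕ} :
    i ∈ p.mirror.support ↔ revAt (p.natDegree + p.natTrailingDegree) i ∈ p.support := by
  rw [mem_support_iff, mem_support_iff, coeff_mirror]

theorem support_mirror {R : Type*} [Semiring R] (p : R[X]) :
    p.mirror.support = p.support.image (revAt (p.natDegree + p.natTrailingDegree)) := by
  ext i
  rw [mem_support_mirror, Finset.mem_image]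
  exact ⟨fun hi => ⟨_, hi, revAt_invol⟩, by rintro ⟨j, hj, rfl⟩; rwa [revAt_invol]⟩

theorem eq_C_mul_trinomial_of_support_eq {F : ℤ[X]} {k n : ℕ} (hk : 0 < k) (hkn : k < n)
    (hF : IsUnit (F.coeff n)) (hsupp : F.support = {0, k, n}) :
    F = C (F.coeff n) * trinomial 0 k n (F.coeff n * F.coeff 0) (F.coeff n * F.coeff k) 1 := by
  have hsq := C_sq_eq_one hF
  nth_rw 1 [F.as_sum_support]
  rw [hsupp, Finset.sum_insert (by grind), Finset.sum_insert (by grind),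
    Finset.sum_singleton]
  simp only [trinomial_def, ← C_mul_X_pow_eq_monomial, C_mul, C_1]
  linear_combination (-C (F.coeff 0) * X ^ 0 - C (F.coeff k) * X ^ k) * hsq

section

variable {F : ℤ[X]} {n m : ℕ} (hm : 0 < m) (hmn : m < n) {ε₁ ε₂ : ℤ}
  (hε₁ : IsUnit ε₁) (hε₂ : IsUnit ε₂)
  (h : F * F.mirror = trinomial 0 m n ε₂ (2 * ε₁) 1 * (trinomial 0 m n ε₂ (2 * ε₁) 1).mirror)

include hm hmn h in
theorem even_card_lagSet_of_mul_mirror_eq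
    (hunit : ∀ i ∈ F.support, IsUnit (F.coeff i)) {t : ℕ} (ht : 0 < t) (htn : t < n) :
    Even (lagSet F.support t).card := by
  refine even_card_lagSet_of_even_autocorr hunit ?_
  rw [autocorr_eq_of_mul_mirror_eq h, autocorr_trinomial hm hmn ht, if_neg htn.ne]
  split_ifs <;> simp [mul_assoc, ← mul_add]

include hm hmn hε₁ hε₂ h in
theorem isExceptional_of_support_eq (hunit : ∀ i ∈ F.support, IsUnit (F.coeff i))
    {a b c d : ℕ} (ha : 0 < a) (hab : a < b)
    (hbc : b < c) (hcd : c < d) (hdn : d < n) (hsupp : F.support = {0, a, b, c, d, n}) :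
    IsExceptional n m ε₁ ε₂ := by
  have heven : ∀ t, 0 < t → t < n → Even (lagSet {0, a, b, c, d, n} t).card := fun t ht htn =>
    hsupp ▸ even_card_lagSet_of_mul_mirror_eq hm hmn h hunit ht htn
  wlog hlt : b + c < n generalizing F a b c d
  · have hne := add_ne_of_even_card_lagSet ha hab hbc hcd hdn heven
    have hN : F.natDegree + F.natTrailingDegree = n := by
      rw [natDegree_eq_of_mul_mirror_eq h, natTrailingDegree_eq_of_mul_mirror_eq h,
        trinomial_natDegree hm hmn one_ne_zero, trinomial_natTrailingDegree hm hmn hε₂.ne_zero,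
        add_zero]
    have hsupp' : F.mirror.support = {0, n - d, n - c, n - b, n - a, n} := by
      rw [support_mirror, hN, hsupp]
      simp only [Finset.image_insert, Finset.image_singleton, revAt_zero, revAt_le, hdn.le,
        (hcd.trans hdn).le, (hbc.trans (hcd.trans hdn)).le,
        (hab.trans (hbc.trans (hcd.trans hdn))).le, le_refl, tsub_self]
      grind
    have h' : F.mirror * F.mirror.mirror = F * F.mirror := by rw [mirror_mirror, mul_comm]
    have hunit' : ∀ i ∈ F.mirror.support, IsUnit (F.mirror.coeff i) := fun i hi => by
      rw [coeff_mirror]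
      exact hunit _ (mem_support_mirror.mp hi)
    exact this (h'.trans h) hunit' (by lia) (by lia) (by lia) (by lia) (by lia) hsupp'
      (fun t ht htn => hsupp' ▸ even_card_lagSet_of_mul_mirror_eq hm hmn (h'.trans h) hunit' ht htn)
      (by lia)
  obtain ⟨rfl, rfl, rfl, rfl⟩ := eq_mul_of_even_card_lagSet ha hab hbc hcd hdn heven hlt
  exact isExceptional_of_autocorr_eq ha hm hmn hε₁ hε₂ hsupp hunit
    (autocorr_eq_of_mul_mirror_eq h)

include hm hmn hε₁ hε₂ h in
theorem associated_of_support_eq {k : ℕ} (hk : 0 < k) (hkn : k < n) (hFn : IsUnit (F.coeff n))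
    (hF : F.coeff n * F.coeff 0 = ε₂) (hFk : F.coeff k ^ 2 = 4) (hsupp : F.support = {0, k, n}) :
    Associated F (trinomial 0 m n ε₂ (2 * ε₁) 1) ∨
      Associated F (trinomial 0 m n ε₂ (2 * ε₁) 1).mirror := by
  have hFP := eq_C_mul_trinomial_of_support_eq hk hkn hFn hsupp
  rw [hF] at hFP
  set P := trinomial 0 k n ε₂ (F.coeff n * F.coeff k) 1
  have hassoc : Associated F P := by
    rw [hFP]
    exact (associated_isUnit_mul_left_iff (isUnit_C.mpr hFn)).mpr (.refl P)
  have hPP : P * P.mirror = F * F.mirror := by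
    rw [hFP, mirror_mul_of_domain, mirror_C]
    linear_combination -P * P.mirror * C_sq_eq_one hFn
  have hsq : (F.coeff n * F.coeff k) ^ 2 = (2 * ε₁) ^ 2 := by
    rw [mul_pow, mul_pow, Int.isUnit_sq hFn, hFk, Int.isUnit_sq hε₁]
    norm_num
  exact (trinomial_associated_of_mul_mirror_eq hk hkn hm hmn hε₂
    (mul_ne_zero two_ne_zero hε₁.ne_zero) hsq (hPP.trans h)).imp hassoc.trans hassoc.trans

include hm hmn hε₁ hε₂ h in
theorem associated_of_mul_mirror_eq (hexc : ¬ IsExceptional n m ε₁ ε₂) :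
    Associated F (trinomial 0 m n ε₂ (2 * ε₁) 1) ∨
      Associated F (trinomial 0 m n ε₂ (2 * ε₁) 1).mirror := by
  have hdeg : F.natDegree = n :=
    (natDegree_eq_of_mul_mirror_eq h).trans (trinomial_natDegree hm hmn one_ne_zero)
  have htrail : F.natTrailingDegree = 0 :=
    (natTrailingDegree_eq_of_mul_mirror_eq h).trans
      (trinomial_natTrailingDegree hm hmn hε₂.ne_zero)
  have hends : F.coeff n * F.coeff 0 = ε₂ := by
    have := leadingCoeff_mul_trailingCoeff_eq_of_mul_mirror_eq h
    rwa [leadingCoeff, trailingCoeff, hdeg, htrail, trinomial_leadingCoeff hm hmn one_ne_zero,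
      trinomial_trailingCoeff hm hmn hε₂.ne_zero, one_mul] at this
  obtain ⟨hFn, hF0⟩ := IsUnit.mul_iff.mp (hends ▸ hε₂)
  have hsum : F.sum (fun _ a => a ^ 2) = 6 := by
    rw [← autocorr_zero, autocorr_eq_of_mul_mirror_eq h, autocorr_trinomial_zero hm hmn, mul_pow,
      Int.isUnit_sq hε₁, Int.isUnit_sq hε₂]
    norm_num
  obtain ⟨k, hk, hkn, hsupp, hFk⟩ | ⟨a, b, c, d, ha, hab, hbc, hcd, hdn, hsupp, hunit⟩ :=
    support_cases_of_sum_sq_eq_six (hm.trans hmn) hdeg hF0 hFn hsum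
  · exact associated_of_support_eq hm hmn hε₁ hε₂ h hk hkn hFn hends hFk hsupp
  · exact absurd
      (isExceptional_of_support_eq hm hmn hε₁ hε₂ h hunit ha hab hbc hcd hdn hsupp) hexc

end

theorem associated_mirror_of_mul {R : Type*} [CommRing R] [IsDomain R] {p q : R[X]}
    (hp : p ≠ 0) (hq : q ≠ 0)
    (h : ∀ F : R[X], F * F.mirror = p * q * (p * q).mirror →
      Associated F (p * q) ∨ Associated F (p * q).mirror) :
    Associated p.mirror p ∨ Associated q q.mirror := by
  have key : p.mirror * q * (p.mirror * q).mirror = p * q * (p * q).mirror := by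
    simp only [mirror_mul_of_domain, mirror_mirror]; ring
  refine (h _ key).imp (fun h' => h'.of_mul_right (.refl q) hq) fun h' => ?_
  rw [mirror_mul_of_domain] at h'
  exact h'.of_mul_left (.refl _) (mirror_eq_zero.not.mpr hp)

theorem isCyclotomic_or_isCyclotomic_of_mul_dvd {n m : ℕ} (hm : 0 < m) (hmn : m < n) {ε₁ ε₂ : ℤ}
    (hε₁ : IsUnit ε₁) (hε₂ : IsUnit ε₂) (hexc : ¬ IsExceptional n m ε₁ ε₂) {p q : ℤ[X]}
    (hp : p.Monic) (hq : q.Monic) (hpi : Irreducible p) (hqi : Irreducible q)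
    (h : p * q ∣ trinomial 0 m n ε₂ (2 * ε₁) 1) : IsCyclotomic p ∨ IsCyclotomic q := by
  have hpf := (Dvd.intro _ rfl).trans h
  have hqf := (Dvd.intro_left _ rfl).trans h
  have hf0 : trinomial 0 m n ε₂ (2 * ε₁) 1 ≠ 0 := (trinomial_monic hm hmn).ne_zero
  obtain ⟨w, hw⟩ := h
  rw [mul_assoc] at hw
  have hqw : q * w ≠ 0 := right_ne_zero_of_mul (hw ▸ hf0)
  have hmirror : (trinomial 0 m n ε₂ (2 * ε₁) 1).mirror = p.mirror * (q * w).mirror := by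
    rw [hw, mirror_mul_of_domain]
  refine (associated_mirror_of_mul hp.ne_zero hqw fun F hF => ?_).imp (fun h => ?_) fun h => ?_
  · rw [← hw] at hF ⊢
    exact associated_of_mul_mirror_eq hm hmn hε₁ hε₂ hF hexc
  · exact isCyclotomic_of_dvd_trinomial_of_dvd_mirror hp hpi hm hmn hε₁ hε₂ hpf
      (hmirror ▸ h.dvd'.mul_right _)
  · exact isCyclotomic_of_dvd_trinomial_of_dvd_mirror hq hqi hm hmn hε₁ hε₂ hqf
      (hmirror ▸ ((Dvd.intro _ rfl).trans h.dvd).mul_left _)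

theorem IsExceptional.exists_eq {n m : ℕ} {ε₁ ε₂ : ℤ} (h : IsExceptional n m ε₁ ε₂) :
    ∃ k : ℕ, 0 < k ∧
      ((n = 7 * k ∧ m = 2 * k ∧ ε₁ = -1 ∧ ε₂ = 1) ∨
       (n = 7 * k ∧ m = 5 * k ∧ ε₁ = -1 ∧ ε₂ = 1) ∨
       (n = 7 * k ∧ m = 2 * k ∧ ε₁ = 1 ∧ ε₂ = -1) ∨
       (n = 7 * k ∧ m = 5 * k ∧ ε₁ = -1 ∧ ε₂ = -1) ∨
       (n = 7 * k ∧ m = 3 * k ∧ ε₁ = 1 ∧ ε₂ = 1) ∨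
       (n = 7 * k ∧ m = 4 * k ∧ ε₁ = 1 ∧ ε₂ = 1) ∨
       (n = 7 * k ∧ m = 3 * k ∧ ε₁ = 1 ∧ ε₂ = -1) ∨
       (n = 7 * k ∧ m = 4 * k ∧ ε₁ = -1 ∧ ε₂ = -1)) := by
  obtain ⟨k, l, hk, rfl, rfl, hl⟩ := h
  refine ⟨k, hk, ?_⟩
  simp only [exceptionalTriples, Finset.mem_insert, Finset.mem_singleton, Prod.mk.injEq] at hl
  obtain ⟨rfl, rfl, rfl⟩ | ⟨rfl, rfl, rfl⟩ | ⟨rfl, rfl, rfl⟩ | ⟨rfl, rfl, rfl⟩ | ⟨rfl, rfl, rfl⟩ |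
    ⟨rfl, rfl, rfl⟩ | ⟨rfl, rfl, rfl⟩ | ⟨rfl, rfl, rfl⟩ := hl <;> simp

end FilasetaTrinomial

/-- Filaseta et al.: outside eight exceptional families, the non-cyclotomic part of
`X^n + 2ε₁X^m + ε₂` is trivial or irreducible. -/
theorem filaseta_trinomial (n m : ℕ) (hm : 0 < m) (hmn : m < n)
    (ε₁ ε₂ : ℤ) (hε₁ : ε₁ = 1 ∨ ε₁ = -1) (hε₂ : ε₂ = 1 ∨ ε₂ = -1)
    (hexc : ¬ ∃ k : ℕ, 0 < k ∧
      ((n = 7 * k ∧ m = 2 * k ∧ ε₁ = -1 ∧ ε₂ = 1) ∨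
       (n = 7 * k ∧ m = 5 * k ∧ ε₁ = -1 ∧ ε₂ = 1) ∨
       (n = 7 * k ∧ m = 2 * k ∧ ε₁ = 1 ∧ ε₂ = -1) ∨
       (n = 7 * k ∧ m = 5 * k ∧ ε₁ = -1 ∧ ε₂ = -1) ∨
       (n = 7 * k ∧ m = 3 * k ∧ ε₁ = 1 ∧ ε₂ = 1) ∨
       (n = 7 * k ∧ m = 4 * k ∧ ε₁ = 1 ∧ ε₂ = 1) ∨
       (n = 7 * k ∧ m = 3 * k ∧ ε₁ = 1 ∧ ε₂ = -1) ∨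
       (n = 7 * k ∧ m = 4 * k ∧ ε₁ = -1 ∧ ε₂ = -1))) :
    ∃ (S : Multiset ℕ) (g : Polynomial ℤ),
      (∀ i ∈ S, 0 < i) ∧
      (X : Polynomial ℤ) ^ n + C (2 * ε₁) * X ^ m + C ε₂ =
        (S.map (fun i => cyclotomic i ℤ)).prod * g ∧
      (g = 1 ∨ Irreducible g) := by
  rw [← Int.isUnit_iff] at hε₁ hε₂
  have htrinomial : (X ^ n + C (2 * ε₁) * X ^ m + C ε₂ : ℤ[X]) = trinomial 0 m n ε₂ (2 * ε₁) 1 := by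
    rw [trinomial_def, C_1]
    ring
  rw [htrinomial]
  exact FilasetaTrinomial.exists_cyclotomic_prod_mul_irreducible (trinomial_monic hm hmn)
    fun p q => FilasetaTrinomial.isCyclotomic_or_isCyclotomic_of_mul_dvd hm hmn hε₁ hε₂
      fun h => hexc h.exists_eq
end

section
/- Let b, c, n, m be positive integers with n > m, let ε₁, ε₂ ∈ {−1, +1}, and set f(X) = X^n + b·ε₁·X^m + c·ε₂ ∈ ℤ[X]. Assume (a) b > 1 + c^{n−1}, and (b) for every divisor d of n with d > 1, c is not a d-th power of a natural number. Then f is irreducible in ℤ[X]. -/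
open Polynomial

/-!
Let `f = X ^ n + B X ^ m + A` with `1 + |A| ^ (n - 1) < |B|`. An integer root `r` would give
`A = r ^ m t` and `B = -(r ^ (n - m) + t)`, which makes `B` too small, so `f` has no linear factor.

A monic factor `g` of degree `k` divides `X ^ n + A` modulo `B`. Comparing the resultants of `g`
with `X ^ n` and with `-A` yields `((-1) ^ k g(0)) ^ n ≡ (-A) ^ k` modulo `B`. If moreover
`g(0) ^ 2 ≤ |A|` and `k ≤ n - 2`, both sides are so small that the congruence is an equality, and
then `|A|` is an `n / gcd(n, k)`-th power. In a factorization `f = g h` one of the constant terms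
satisfies this bound, since `g(0) h(0) = A`.
-/

theorem X_pow_add_C_mul_X_pow_add_C_eq_trinomial {R : Type*} [Semiring R] (a b : R) (m n : ℕ) :
    X ^ n + C b * X ^ m + C a = trinomial 0 m n a b 1 := by
  rw [trinomial_def, pow_zero, mul_one, C_1, one_mul]
  abel

section Resultant

variable {R : Type*} [CommRing R] {g : R[X]}

theorem resultant_eq_of_monic_dvd_sub {p q : R[X]} {n : ℕ} (hg : g.Monic) (hp : p.natDegree ≤ n)
    (hq : q.natDegree ≤ n) (hdvd : g ∣ p - q) :
    resultant g p g.natDegree n = resultant g q g.natDegree n := by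
  obtain ⟨h, hh⟩ := hdvd
  obtain rfl | h0 := eq_or_ne h 0
  · rw [sub_eq_zero.1 (hh.trans (mul_zero g))]
  have hdeg : h.natDegree + g.natDegree ≤ n := by
    rw [add_comm, ← hg.natDegree_mul' h0, ← hh]
    exact (natDegree_sub_le_of_le hp hq).trans_eq (max_self n)
  rw [← resultant_add_mul_right g q h _ _ hdeg le_rfl, ← hh, add_sub_cancel]

theorem coeff_zero_pow_eq_of_monic_dvd_X_pow_add_C {a : R} {n : ℕ} (hg : g.Monic)
    (hdvd : g ∣ X ^ n + C a) :
    ((-1) ^ g.natDegree * g.coeff 0) ^ n = (-a) ^ g.natDegree := by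
  have hres := resultant_eq_of_monic_dvd_sub (p := X ^ n) (q := C (-a)) hg (natDegree_X_pow_le n)
    (by simp) (by simpa using hdvd)
  rw [resultant_X_pow_right _ _ _ le_rfl, resultant_C_right, hg.coeff_natDegree, one_pow,
    one_mul] at hres
  rw [mul_pow, ← pow_mul, hres]

theorem dvd_coeff_zero_pow_sub_of_monic_dvd {a b : R} {q : R[X]} {n : ℕ} (hg : g.Monic)
    (hdvd : g ∣ X ^ n + C b * q + C a) :
    b ∣ ((-1) ^ g.natDegree * g.coeff 0) ^ n - (-a) ^ g.natDegree := by
  let φ := Ideal.Quotient.mk (Ideal.span {b})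
  have hφb : φ b = 0 := Ideal.Quotient.mk_singleton_self b
  rw [← Ideal.Quotient.eq_zero_iff_dvd]
  nontriviality R ⧸ Ideal.span {b}
  have hmap : g.map φ ∣ X ^ n + C (φ a) := by
    simpa [hφb] using Polynomial.map_dvd φ hdvd
  have hpow := coeff_zero_pow_eq_of_monic_dvd_X_pow_add_C (hg.map φ) hmap
  rw [hg.natDegree_map, coeff_map] at hpow
  simpa [sub_eq_zero] using hpow

end Resultant

theorem exists_dvd_eq_pow_of_pow_eq_pow {a c k n : ℕ} (hn : n ≠ 0) (hnk : ¬ n ∣ k)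
    (h : a ^ n = c ^ k) : ∃ d, d ∣ n ∧ 1 < d ∧ ∃ u, c = u ^ d := by
  obtain ⟨u, -, hu⟩ := Nat.exists_eq_pow_of_pow_eq_pow (Or.inl hn) h
  have hgcd : n.gcd k < n :=
    (Nat.gcd_le_left k hn.bot_lt).lt_of_ne fun heq ↦ hnk (Nat.gcd_eq_left_iff_dvd.1 heq)
  have hdvd := Nat.gcd_dvd_left n k
  refine ⟨n / n.gcd k, Nat.div_dvd_of_dvd hdvd, ?_, u, hu⟩
  rwa [Nat.lt_div_iff_mul_lt_of_dvd (Nat.gcd_ne_zero_left hn) hdvd, one_mul]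

theorem two_le_of_forall_ne_pow {c n : ℕ} (hn : 1 < n)
    (hpow : ∀ d : ℕ, d ∣ n → 1 < d → ¬ ∃ u : ℕ, c = u ^ d) : 2 ≤ c := by
  by_contra! hc
  have hc' : c = c ^ n := by
    obtain rfl | rfl : c = 0 ∨ c = 1 := by lia
    · rw [zero_pow (by lia)]
    · rw [one_pow]
  exact hpow n dvd_rfl hn ⟨c, hc'⟩

theorem pow_add_pow_le_pow_sub_one {a c k n : ℕ} (hn : 4 ≤ n) (hkn : k + 2 ≤ n) (hc : 2 ≤ c)
    (hac : a ^ 2 ≤ c) : a ^ n + c ^ k ≤ c ^ (n - 1) := by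
  have ha : a ^ n ≤ c ^ (n - 2) := by
    obtain rfl | ha0 := a.eq_zero_or_pos
    · simp [show n ≠ 0 by lia]
    calc a ^ n ≤ a ^ (2 * (n - 2)) := Nat.pow_le_pow_right ha0 (by lia)
      _ = (a ^ 2) ^ (n - 2) := pow_mul a 2 (n - 2)
      _ ≤ c ^ (n - 2) := Nat.pow_le_pow_left hac _
  calc a ^ n + c ^ k ≤ c ^ (n - 2) + c ^ (n - 2) :=
        add_le_add ha (Nat.pow_le_pow_right (by lia) (by lia))
    _ = 2 * c ^ (n - 2) := (two_mul _).symm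
    _ ≤ c * c ^ (n - 2) := Nat.mul_le_mul_right _ hc
    _ = c ^ (n - 1) := by rw [← pow_succ', show n - 2 + 1 = n - 1 by lia]

section Integer

variable {A B : ℤ} {n : ℕ} {g : ℤ[X]}

theorem natAbs_le_of_isRoot_trinomial {r : ℤ} {m : ℕ} (hA : A ≠ 0) (hm : 0 < m) (hmn : m < n)
    (hr : (X ^ n + C B * X ^ m + C A).IsRoot r) : B.natAbs ≤ 1 + A.natAbs ^ (n - 1) := by
  obtain ⟨t, hB⟩ : ∃ t, B = -(r ^ (n - m) + t) := ⟨-(r ^ (n - m) + B), by ring⟩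
  have hAt : A = r ^ m * t := by
    have hr0 : r ^ n + B * r ^ m + A = 0 := by simpa using hr
    rw [← pow_sub_mul_pow r hmn.le] at hr0
    linear_combination hr0 - r ^ m * hB
  have hr1 : 1 ≤ r.natAbs := by
    refine Int.natAbs_pos.2 fun h ↦ hA ?_
    simp [hAt, h, hm.ne']
  have ht1 : 1 ≤ t.natAbs := Int.natAbs_pos.2 fun h ↦ hA (by simp [hAt, h])
  have hx : r.natAbs ^ (n - m) ≤ (r.natAbs ^ m) ^ (n - 1) := by
    rw [← pow_mul]
    exact Nat.pow_le_pow_right hr1 ((by lia : n - m ≤ n - 1).trans (Nat.le_mul_of_pos_left _ hm))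
  have ht : t.natAbs ≤ t.natAbs ^ (n - 1) := Nat.le_self_pow (by lia) _
  calc B.natAbs ≤ r.natAbs ^ (n - m) + t.natAbs := by
        rw [hB, Int.natAbs_neg, ← Int.natAbs_pow]
        exact Int.natAbs_add_le _ _
    _ ≤ (r.natAbs ^ m) ^ (n - 1) + t.natAbs ^ (n - 1) := add_le_add hx ht
    _ ≤ 1 + (r.natAbs ^ m) ^ (n - 1) * t.natAbs ^ (n - 1) := by
        have := Nat.add_sub_one_le_mul (a := (r.natAbs ^ m) ^ (n - 1)) (b := t.natAbs ^ (n - 1))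
          (by positivity) (by positivity)
        lia
    _ = 1 + A.natAbs ^ (n - 1) := by
        rw [hAt, Int.natAbs_mul, Int.natAbs_pow, mul_pow]

theorem natDegree_ne_one_of_monic_dvd_trinomial {m : ℕ} (hA : A ≠ 0) (hm : 0 < m) (hmn : m < n)
    (hAB : 1 + A.natAbs ^ (n - 1) < B.natAbs) (hg : g.Monic)
    (hdvd : g ∣ X ^ n + C B * X ^ m + C A) : g.natDegree ≠ 1 := by
  intro hg1
  have hroot : g.IsRoot (-g.coeff 0) := by
    rw [hg.eq_X_add_C hg1]
    simp
  exact hAB.not_ge (natAbs_le_of_isRoot_trinomial hA hm hmn (hroot.dvd hdvd))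

theorem natAbs_lt_coeff_zero_sq_of_monic_dvd {q : ℤ[X]} (hAB : A.natAbs ^ (n - 1) < B.natAbs)
    (hpow : ∀ d : ℕ, d ∣ n → 1 < d → ¬ ∃ u : ℕ, A.natAbs = u ^ d) (hg : g.Monic)
    (hdvd : g ∣ X ^ n + C B * q + C A) (hn : 4 ≤ n) (hg0 : g.natDegree ≠ 0)
    (hgn : g.natDegree + 2 ≤ n) : A.natAbs < (g.coeff 0).natAbs ^ 2 := by
  by_contra! hsmall
  have hA : 2 ≤ A.natAbs := two_le_of_forall_ne_pow (by lia) hpow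
  have hlt : (g.coeff 0).natAbs ^ n + A.natAbs ^ g.natDegree < B.natAbs :=
    (pow_add_pow_le_pow_sub_one hn hgn hA hsmall).trans_lt hAB
  have heq : ((-1) ^ g.natDegree * g.coeff 0) ^ n = (-A) ^ g.natDegree := by
    refine sub_eq_zero.1 (Int.eq_zero_of_dvd_of_natAbs_lt_natAbs
      (dvd_coeff_zero_pow_sub_of_monic_dvd hg hdvd) ((Int.natAbs_sub_le _ _).trans_lt ?_))
    simpa [Int.natAbs_mul, Int.natAbs_pow] using hlt
  have hnat : (g.coeff 0).natAbs ^ n = A.natAbs ^ g.natDegree := by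
    simpa [Int.natAbs_mul, Int.natAbs_pow] using congrArg Int.natAbs heq
  obtain ⟨d, hdn, hd, hu⟩ := exists_dvd_eq_pow_of_pow_eq_pow (by lia)
    (Nat.not_dvd_of_pos_of_lt hg0.bot_lt (by lia)) hnat
  exact hpow d hdn hd hu

theorem natDegree_lt_two_or_natDegree_lt_two_of_mul_eq {h q : ℤ[X]}
    (hAB : A.natAbs ^ (n - 1) < B.natAbs)
    (hpow : ∀ d : ℕ, d ∣ n → 1 < d → ¬ ∃ u : ℕ, A.natAbs = u ^ d) (hg : g.Monic) (hh : h.Monic)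
    (hn : g.natDegree + h.natDegree = n) (hq : q.coeff 0 = 0)
    (hgh : g * h = X ^ n + C B * q + C A) : g.natDegree < 2 ∨ h.natDegree < 2 := by
  by_contra! hdeg
  have hg0 : A.natAbs < (g.coeff 0).natAbs ^ 2 :=
    natAbs_lt_coeff_zero_sq_of_monic_dvd hAB hpow hg ⟨h, hgh.symm⟩
      (by lia) (by lia) (by lia)
  have hh0 : A.natAbs < (h.coeff 0).natAbs ^ 2 :=
    natAbs_lt_coeff_zero_sq_of_monic_dvd hAB hpow hh ⟨g, by rw [← hgh, mul_comm]⟩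
      (by lia) (by lia) (by lia)
  have hcoeff : g.coeff 0 * h.coeff 0 = A := by
    rw [← mul_coeff_zero, hgh]
    simp [coeff_X_pow, hq, show 0 ≠ n by lia]
  refine (mul_lt_mul'' hg0 hh0 (Nat.zero_le _) (Nat.zero_le _)).ne ?_
  rw [← hcoeff, Int.natAbs_mul]
  ring

end Integer

/-- Nagell's irreducibility criterion for trinomials with large middle coefficient. -/
theorem nagell_criterion (b c n m : ℕ) (hb : 0 < b) (hc : 0 < c) (hm : 0 < m)
    (hmn : m < n) (ε₁ ε₂ : ℤ) (hε₁ : ε₁ = 1 ∨ ε₁ = -1) (hε₂ : ε₂ = 1 ∨ ε₂ = -1)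
    (hbig : b > 1 + c ^ (n - 1))
    (hpow : ∀ d : ℕ, d ∣ n → 1 < d → ¬ ∃ u : ℕ, c = u ^ d) :
    Irreducible ((X : Polynomial ℤ) ^ n + C ((b : ℤ) * ε₁) * X ^ m + C ((c : ℤ) * ε₂)) := by
  have hB : ((b : ℤ) * ε₁).natAbs = b := by rcases hε₁ with rfl | rfl <;> simp
  have hA : ((c : ℤ) * ε₂).natAbs = c := by rcases hε₂ with rfl | rfl <;> simp
  generalize (b : ℤ) * ε₁ = B at *
  generalize (c : ℤ) * ε₂ = A at *
  subst hA hB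
  have htri := X_pow_add_C_mul_X_pow_add_C_eq_trinomial A B m n
  have hmonic : (X ^ n + C B * X ^ m + C A).Monic := htri ▸ trinomial_monic hm hmn
  have hdeg : (X ^ n + C B * X ^ m + C A).natDegree = n :=
    htri ▸ trinomial_natDegree hm hmn one_ne_zero
  refine hmonic.irreducible_iff_natDegree.2 ⟨fun h ↦ ?_, fun g h hg hh hgh ↦ ?_⟩
  · rw [h, natDegree_one] at hdeg
    lia
  have hn : g.natDegree + h.natDegree = n := by rw [← hg.natDegree_mul hh, hgh, hdeg]
  have hg1 := natDegree_ne_one_of_monic_dvd_trinomial (by lia) hm hmn hbig hg ⟨h, hgh.symm⟩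
  have hh1 := natDegree_ne_one_of_monic_dvd_trinomial (by lia) hm hmn hbig hh
    ⟨g, by rw [← hgh, mul_comm]⟩
  have hlt := natDegree_lt_two_or_natDegree_lt_two_of_mul_eq (by lia) hpow hg hh hn
    (by simp [hm.ne]) hgh
  lia
end
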